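/- arXiv:2102.00480 — 4 statements merged into one kernel-verified Lean document; each statement's English description precedes it below -/
import Mathlib

section
/- Let L/F be a Galois extension of non-archimedean local fields of characteristic zero whose Galois group is isomorphic to the Klein four-group Z/2 × Z/2, and let E be a quadratic extension of F contained in L. Then every element of F^× is a norm from L to E, i.e. F^× ⊆ N_{L/E}(L^×). -/
/-!
Let `τ` generate `Gal(L/E)`. Since `Gal(L/F)` is a Klein four-group, `L = E(f)` with `τ f = -f` and
`e = f ^ 2` in `F`, so the norms from `L` to `E` are the elements `x ^ 2 - e * y ^ 2`. Hence `a` is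
a norm as soon as the reduced norm of the quaternion algebra `(e, a)` has a nontrivial zero over
`E`, and the theorem amounts to the fact that every quaternion algebra over `F` is split by every
quadratic extension `E`.

Suppose `(e, a)` is anisotropic over `F`. A compactness argument produces a quaternion `x` of trace
`T` and reduced norm `N` such that `X ^ 2 - T * X + N` is integral with irreducible reduction. If
`E` has the same value group as `F`, then it is unramified, so it contains a root `w` of this
polynomial and `x - w` has reduced norm `0`. Otherwise the absolute value of each element of `F` is
a square in the value group of `E`, so by Hensel's lemma the element has the form
`s ^ 2 - T * s * t + N * t ^ 2` with `s` and `t` in `E`. This is the reduced norm of `s - t * x`,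
and for `y` orthogonal to the span of `1` and `x` one can choose `s` and `t` so that it cancels the
reduced norm of `y`.
-/

open scoped NormedField Valued Quaternion
open IsLocalRing Polynomial Metric Module Filter

section CompactLocalRing

variable (R : Type*) [CommRing R] [IsLocalRing R] [IsNoetherianRing R]

theorem isAdic_maximalIdeal_of_compactSpace [TopologicalSpace R] [IsTopologicalRing R]
    [CompactSpace R] [T2Space R] : IsAdic (maximalIdeal R) := by
  refine isAdic_iff.2 ⟨isOpen_maximalIdeal_pow R, fun s hs ↦ ?_⟩
  refine exists_subset_nhds_of_compactSpace
    (V := fun n : ℕ ↦ ((maximalIdeal R ^ n : Ideal R) : Set R))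
    (Antitone.directed_ge fun _ _ ↦ Ideal.pow_le_pow_right)
    (fun n ↦ IsNoetherianRing.isClosed_ideal _) fun x hx ↦ ?_
  have hx0 : x ∈ ⨅ n : ℕ, maximalIdeal R ^ n := by simpa using hx
  rw [Ideal.iInf_pow_eq_bot_of_isLocalRing _ (maximalIdeal.isMaximal R).ne_top] at hx0
  rwa [Ideal.mem_bot.1 hx0]

theorem henselianLocalRing_of_compactSpace [UniformSpace R] [IsUniformAddGroup R]
    [IsTopologicalRing R] [CompactSpace R] [T2Space R] : HenselianLocalRing R := by
  have := (isAdic_maximalIdeal_of_compactSpace R).isAdicComplete_iff.2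
    ⟨inferInstance, inferInstance⟩
  refine ⟨fun f hf a₀ h₁ h₂ ↦ HenselianRing.is_henselian f hf a₀ h₁ (h₂.map _)⟩

end CompactLocalRing

theorem residue_eq_zero_iff_norm_lt_one {K : Type*} [NontriviallyNormedField K]
    [IsUltrametricDist K] {x : 𝒪[K]} : residue 𝒪[K] x = 0 ↔ ‖(x : K)‖ < 1 := by
  rw [residue_eq_zero_iff, mem_maximalIdeal, mem_nonunits_iff,
    Valued.integer.isUnit_iff_norm_eq_one]
  exact (Valued.integer.norm_le_one x).lt_iff_ne.symm

section LocalField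

variable (K : Type*) [NontriviallyNormedField K] [IsUltrametricDist K] [ProperSpace K]

instance compactSpace_integer : CompactSpace 𝒪[K] := by
  refine isCompact_iff_compactSpace.1 (?_ : IsCompact {x : K | x ∈ 𝒪[K]})
  simpa [Valued.integer.mem_iff, Metric.closedBall] using isCompact_closedBall (0 : K) 1

instance isDiscreteValuationRing_integer : IsDiscreteValuationRing 𝒪[K] :=
  have : (Valued.v : Valuation K _).RankOne :=
    inferInstanceAs (NormedField.valuation (K := K)).RankOne
  Valued.integer.isDiscreteValuationRing_of_compactSpace

instance henselianLocalRing_integer : HenselianLocalRing 𝒪[K] :=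
  henselianLocalRing_of_compactSpace _

variable {K}

theorem exists_norm_eq_zpow : ∃ ϖ : K, ϖ ≠ 0 ∧ ∀ x : K, x ≠ 0 → ∃ n : ℤ, ‖x‖ = ‖ϖ‖ ^ n := by
  obtain ⟨ϖ, hϖ⟩ := IsDiscreteValuationRing.exists_irreducible 𝒪[K]
  have integral (x : 𝒪[K]) (hx : x ≠ 0) : ∃ n : ℕ, ‖(x : K)‖ = ‖(ϖ : K)‖ ^ n := by
    obtain ⟨n, u, hu⟩ := IsDiscreteValuationRing.associated_pow_irreducible hx hϖ
    refine ⟨n, ?_⟩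
    rw [← norm_pow, ← SubmonoidClass.coe_pow, ← hu]
    simp
  refine ⟨ϖ, by simpa using hϖ.ne_zero, fun x hx ↦ ?_⟩
  rcases le_total ‖x‖ 1 with h | h
  · obtain ⟨n, hn⟩ := integral ⟨x, Valued.integer.mem_iff.2 h⟩
      (by simpa [Subtype.ext_iff] using hx)
    exact ⟨n, by simpa using hn⟩
  · have hx' : ‖x⁻¹‖ ≤ 1 := by simpa using inv_le_one_of_one_le₀ h
    obtain ⟨n, hn⟩ := integral ⟨x⁻¹, Valued.integer.mem_iff.2 hx'⟩
      (by simpa [Subtype.ext_iff] using hx)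
    exact ⟨-n, by simpa [inv_eq_iff_eq_inv] using hn⟩

theorem norm_eq_sq_or_norm_eq_sq_or_norm_eq_mul_sq (x y : K) :
    (∃ t : K, ‖x‖ = ‖t‖ ^ 2) ∨ (∃ t : K, ‖y‖ = ‖t‖ ^ 2) ∨ ∃ t : K, ‖x‖ = ‖y‖ * ‖t‖ ^ 2 := by
  obtain ⟨ϖ, hϖ0, hϖ⟩ := exists_norm_eq_zpow (K := K)
  rcases eq_or_ne x 0 with rfl | hx
  · exact .inl ⟨0, by simp⟩
  rcases eq_or_ne y 0 with rfl | hy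
  · exact .inr <| .inl ⟨0, by simp⟩
  obtain ⟨m, hm⟩ := hϖ x hx
  obtain ⟨n, hn⟩ := hϖ y hy
  have hϖ' : ‖ϖ‖ ≠ 0 := norm_ne_zero_iff.2 hϖ0
  have sq_zpow (i : ℤ) : ‖ϖ ^ i‖ ^ 2 = ‖ϖ‖ ^ (i + i) := by rw [norm_zpow, sq, zpow_add₀ hϖ']
  rcases Int.even_or_odd m with ⟨i, hi⟩ | hm_odd
  · exact .inl ⟨ϖ ^ i, by rw [hm, hi, sq_zpow]⟩
  rcases Int.even_or_odd n with ⟨j, hj⟩ | hn_odd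
  · exact .inr <| .inl ⟨ϖ ^ j, by rw [hn, hj, sq_zpow]⟩
  obtain ⟨i, hi⟩ := hm_odd.sub_odd hn_odd
  exact .inr <| .inr ⟨ϖ ^ i, by rw [hm, hn, sq_zpow, ← zpow_add₀ hϖ', ← hi, add_sub_cancel]⟩

end LocalField

/-- The monic quadratic polynomial `X ^ 2 - T * X + N`: the polynomial of an element of trace `T`
and norm `N` of a quadratic or quaternion algebra, whence the sign of the linear term. -/
noncomputable def quadPoly {R : Type*} [CommRing R] (T N : R) : R[X] := X ^ 2 - C T * X + C N

section QuadPoly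

variable {R S : Type*} [CommRing R] [CommRing S]

@[simp]
theorem eval_quadPoly (T N x : R) : (quadPoly T N).eval x = x ^ 2 - T * x + N := by
  simp [quadPoly]

@[simp]
theorem map_quadPoly (φ : R →+* S) (T N : R) : (quadPoly T N).map φ = quadPoly (φ T) (φ N) := by
  simp [quadPoly]

@[simp]
theorem derivative_quadPoly (T N : R) : (quadPoly T N).derivative = 2 * X - C T := by
  simp [quadPoly, one_add_one_eq_two, ← map_ofNat C]

theorem natDegree_quadPoly [Nontrivial R] (T N : R) : (quadPoly T N).natDegree = 2 := by
  unfold quadPoly; compute_degree!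

theorem monic_quadPoly (T N : R) : (quadPoly T N).Monic := by
  nontriviality R
  rw [Monic, leadingCoeff, natDegree_quadPoly]
  simp [quadPoly]

theorem exists_eq_quadPoly_of_monic {p : R[X]} (hp : p.Monic) (hdeg : p.natDegree = 2) :
    ∃ T N : R, p = quadPoly T N := by
  refine ⟨-p.coeff 1, p.coeff 0, ?_⟩
  have hlead : p.coeff 2 = 1 := hdeg ▸ hp
  conv_lhs => rw [p.as_sum_range_C_mul_X_pow, hdeg]
  simp only [Finset.sum_range_succ, Finset.sum_range_zero, hlead, quadPoly, map_neg, map_one]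
  ring

theorem irreducible_quadPoly_iff {k : Type*} [Field k] {T N : k} :
    Irreducible (quadPoly T N) ↔ ∀ t, t ^ 2 - T * t + N ≠ 0 := by
  have hdeg := natDegree_quadPoly T N
  rw [(monic_quadPoly T N).irreducible_iff_roots_eq_zero_of_degree_le_three hdeg.ge
    (by lia), Multiset.eq_zero_iff_forall_notMem]
  simp [(monic_quadPoly T N).ne_zero]

theorem disc_ne_zero_of_irreducible_quadPoly {k : Type*} [Field k] [PerfectField k]
    {T N : k} (h : Irreducible (quadPoly T N)) : T ^ 2 - 4 * N ≠ 0 := by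
  intro hdisc
  have hsq : (quadPoly T N).derivative ^ 2 = C 4 * quadPoly T N := by
    have hC : C (T ^ 2 - 4 * N) = 0 := by rw [hdisc, C_0]
    simp only [map_sub, map_mul, map_pow, map_ofNat] at hC
    rw [derivative_quadPoly, quadPoly, map_ofNat]
    linear_combination hC
  have hsep := (PerfectField.separable_of_irreducible h).pow_right (n := 2)
  exact h.not_isUnit (hsep.isUnit_of_dvd' dvd_rfl (Dvd.intro_left _ hsq.symm))

end QuadPoly

section FiniteField

variable {k : Type*} [Field k] [Finite k]

theorem exists_aeval_eq_zero_of_natDegree_dvd {κ : Type*} [Field κ] [Algebra k κ] {p q : k[X]}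
    (hp : Irreducible p) (hq : Irreducible q) (hpq : p.natDegree ∣ q.natDegree) {θ : κ}
    (hθ : aeval θ q = 0) : ∃ w : κ, aeval w p = 0 := by
  have := Fact.mk hp
  have := Fact.mk hq
  have hfin {r : k[X]} (hr : Irreducible r) : FiniteDimensional k (AdjoinRoot r) :=
    (AdjoinRoot.powerBasis hr.ne_zero).finite
  have hrank (r : k[X]) : finrank k (AdjoinRoot r) = r.natDegree :=
    finrank_quotient_span_eq_natDegree
  have := hfin hp
  have := hfin hq
  have := Module.finite_of_finite k (M := AdjoinRoot q)
  have := Module.finite_of_finite k (M := AdjoinRoot p)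
  obtain ⟨φ⟩ := FiniteField.nonempty_algHom_of_finrank_dvd (F := k)
    (K := AdjoinRoot p) (L := AdjoinRoot q) (by rwa [hrank, hrank])
  let ψ : AdjoinRoot p →ₐ[k] κ := (AdjoinRoot.liftAlgHom q (Algebra.ofId k κ) θ hθ).comp φ
  exact ⟨ψ (AdjoinRoot.root p), by rw [aeval_algHom_apply, AdjoinRoot.aeval_eq]; simp⟩

theorem exists_normForm_eq_of_disc_ne_zero {T N : k} (hdisc : T ^ 2 - 4 * N ≠ 0) (u : k) :
    ∃ s t : k, s ^ 2 - T * s * t + N * t ^ 2 = u := by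
  by_cases hchar : ringChar k = 2
  · obtain ⟨s, rfl⟩ := FiniteField.isSquare_of_char_two hchar u
    exact ⟨s, 0, by ring⟩
  have := Fintype.ofFinite k
  have h2 : (2 : k) ≠ 0 := Ring.two_ne_zero hchar
  obtain ⟨r, t, hrt⟩ := FiniteField.exists_root_sum_quadratic (R := k)
    (f := C 1 * X ^ 2 + C 0 * X + C (-4 * u)) (g := C (-(T ^ 2 - 4 * N)) * X ^ 2 + C 0 * X + C 0)
    (degree_quadratic one_ne_zero) (degree_quadratic (neg_ne_zero.2 hdisc))
    (FiniteField.odd_card_of_char_ne_two hchar)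
  refine ⟨(r + T * t) / 2, t, ?_⟩
  simp only [eval_add, eval_mul, eval_C, eval_pow, eval_X] at hrt
  field_simp
  linear_combination hrt

end FiniteField

section Henselian

variable {R S : Type*} [CommRing R] [HenselianLocalRing R] [Finite (ResidueField R)]
    [CommRing S] [HenselianLocalRing S]

theorem exists_isRoot_of_separable_map_residue {p : S[X]} (hp : p.Monic)
    (hsep : (p.map (residue S)).Separable) {w : ResidueField S}
    (hw : (p.map (residue S)).IsRoot w) : ∃ z : S, p.IsRoot z := by
  have hsimple : (p.map (residue S)).derivative.eval w ≠ 0 := by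
    simpa using hsep.eval₂_derivative_ne_zero (RingHom.id _) hw
  have lift := ((HenselianLocalRing.TFAE S).out 0 1).1 ‹_›
  obtain ⟨z, hz, -⟩ := lift p hp w (by simpa [aeval_def, eval₂_eq_eval_map] using hw)
    (by simpa [aeval_def, eval₂_eq_eval_map, derivative_map] using hsimple)
  exact ⟨z, hz⟩

theorem exists_isRoot_map_of_natDegree_dvd (φ : R →+* S) [IsLocalHom φ] {p q : R[X]}
    (hp : p.Monic) (hp_irr : Irreducible (p.map (residue R)))
    (hq : q.Monic) (hq_irr : Irreducible (q.map (residue R)))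
    (hpq : p.natDegree ∣ q.natDegree) {θ : S} (hθ : (q.map φ).IsRoot θ) :
    ∃ w : S, (p.map φ).IsRoot w := by
  let := (ResidueField.map φ : ResidueField R →+* ResidueField S).toAlgebra
  have map_map_residue (r : R[X]) : (r.map φ).map (residue S) =
      (r.map (residue R)).map (algebraMap (ResidueField R) (ResidueField S)) := by
    simp only [Polynomial.map_map]; rfl
  obtain ⟨w, hw⟩ := exists_aeval_eq_zero_of_natDegree_dvd hp_irr hq_irr
    (by simpa [hp.natDegree_map, hq.natDegree_map] using hpq) (θ := residue S θ) (by
      rw [aeval_def, eval₂_eq_eval_map, ← map_map_residue]; exact hθ.map)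
  refine exists_isRoot_of_separable_map_residue (hp.map φ) (w := w) ?_ ?_
  · rw [map_map_residue]
    exact (PerfectField.separable_of_irreducible hp_irr).map
  · rwa [map_map_residue, IsRoot, ← eval₂_eq_eval_map]

theorem exists_isRoot_quadPoly_of_isUnit {T N z : S} (hz : residue S (z ^ 2 - T * z + N) = 0)
    (hsimple : IsUnit (2 * z - T)) : ∃ w : S, w ^ 2 - T * w + N = 0 := by
  obtain ⟨w, hw, -⟩ := HenselianLocalRing.is_henselian _ (monic_quadPoly T N) z
    (by rwa [eval_quadPoly, ← residue_eq_zero_iff]) (by simpa [derivative_quadPoly] using hsimple)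
  exact ⟨w, by simpa [IsRoot] using hw⟩

/-- If both partial derivatives `2 * s - T * t` and `2 * N * t - T * s` vanished at a solution over
the residue field, so would `(T ^ 2 - 4 * N) * u`. Hence one of them is a unit, and Hensel's lemma
applies in the corresponding variable. -/
theorem exists_normForm_eq_of_isUnit {T N u : R} (hN : IsUnit N) (hdisc : IsUnit (T ^ 2 - 4 * N))
    (hu : IsUnit u) : ∃ s t : R, s ^ 2 - T * s * t + N * t ^ 2 = u := by
  have hdisc' : residue R T ^ 2 - 4 * residue R N ≠ 0 := by
    simpa only [map_sub, map_mul, map_pow, map_ofNat] using (residue_ne_zero_iff_isUnit _).2 hdisc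
  obtain ⟨s', t', hst'⟩ := exists_normForm_eq_of_disc_ne_zero hdisc' (residue R u)
  obtain ⟨s, rfl⟩ := residue_surjective s'
  obtain ⟨t, rfl⟩ := residue_surjective t'
  have hst : residue R (s ^ 2 - T * s * t + N * t ^ 2 - u) = 0 := by simpa [sub_eq_zero] using hst'
  by_cases hs : IsUnit (2 * s - T * t)
  · obtain ⟨s, hs⟩ := exists_isRoot_quadPoly_of_isUnit (T := T * t) (N := N * t ^ 2 - u)
      (by convert hst using 2; ring) hs
    exact ⟨s, t, by linear_combination hs⟩
  obtain ⟨M, hM⟩ := hN.exists_right_inv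
  have ht : IsUnit (2 * t - T * s * M) := by
    by_contra ht
    rw [← residue_ne_zero_iff_isUnit, not_not] at hs ht
    have ht' : residue R (2 * N * t - T * s) = 0 := by
      rw [show 2 * N * t - T * s = N * (2 * t - T * s * M) by linear_combination T * s * hM,
        map_mul, ht, mul_zero]
    refine (residue_ne_zero_iff_isUnit _).2 (hdisc.mul hu) ?_
    rw [show (T ^ 2 - 4 * N) * u = -((2 * N * t - T * s) ^ 2 +
      T * (2 * s - T * t) * (2 * N * t - T * s) + N * (2 * s - T * t) ^ 2) -
      (T ^ 2 - 4 * N) * (s ^ 2 - T * s * t + N * t ^ 2 - u) by ring]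
    simp [hs, ht', hst]
  obtain ⟨t, ht⟩ := exists_isRoot_quadPoly_of_isUnit (T := T * s * M) (N := (s ^ 2 - u) * M)
    (z := t) (by
      rw [show t ^ 2 - T * s * M * t + (s ^ 2 - u) * M =
        M * (s ^ 2 - T * s * t + N * t ^ 2 - u) by linear_combination (-t ^ 2) * hM]
      simp [hst]) ht
  exact ⟨s, t, by linear_combination N * ht + (T * s * t - s ^ 2 + u) * hM⟩

end Henselian

section HomogeneousFunction

variable {K : Type*} [NontriviallyNormedField K] {d : ℕ}

theorem tendsto_cocompact_atTop_of_smul_eq_norm_pow_mul {V : Type*} [NormedAddCommGroup V]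
    [NormedSpace K V] [ProperSpace V] (hd : d ≠ 0) {ρ : V → ℝ} (hcont : Continuous ρ)
    (hsmul : ∀ (c : K) x, ρ (c • x) = ‖c‖ ^ d * ρ x) (hpos : ∀ x, x ≠ 0 → 0 < ρ x) :
    Tendsto ρ (cocompact V) atTop := by
  obtain ⟨c, hc⟩ := NormedField.exists_one_lt_norm K
  let shell : Set V := closedBall 0 1 \ ball 0 (1 / ‖c‖)
  have hshell : IsCompact shell := (isCompact_closedBall 0 1).diff isOpen_ball
  have shell_pos : ∀ x ∈ shell, 0 < ρ x := fun x hx ↦ hpos x <| by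
    rintro rfl
    exact hx.2 (by simpa using one_pos.trans hc)
  obtain ⟨m, hm, hmρ⟩ := hshell.exists_forall_le' hcont.continuousOn shell_pos
  have lower_bound (x : V) : m * ‖x‖ ^ d ≤ ρ x := by
    rcases eq_or_ne x 0 with rfl | hx
    · simpa [hd] using (hsmul 0 0).ge
    obtain ⟨r, hr0, hr_lt, hr_le, -⟩ := rescale_to_shell hc one_pos hx
    refine le_of_mul_le_mul_left ?_ (pow_pos (norm_pos_iff.2 hr0) d)
    calc ‖r‖ ^ d * (m * ‖x‖ ^ d) = m * ‖r • x‖ ^ d := by rw [norm_smul]; ring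
      _ ≤ m := mul_le_of_le_one_right hm.le (pow_le_one₀ (norm_nonneg _) hr_lt.le)
      _ ≤ ρ (r • x) := hmρ _ ⟨by simpa using hr_lt.le, by simpa using hr_le⟩
      _ = ‖r‖ ^ d * ρ x := hsmul r x
  exact tendsto_atTop_mono lower_bound <|
    ((tendsto_pow_atTop hd).comp tendsto_norm_cocompact_atTop).const_mul_atTop hm

variable [ProperSpace K] {ι : Type*} [Finite ι]

theorem exists_notMem_forall_le_sub {V : Type*} [AddCommGroup V] [Module K V]
    (b : Basis ι K V) (hd : d ≠ 0) {ρ : V → ℝ} (hcont : Continuous fun v ↦ ρ (b.equivFun.symm v))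
    (hsmul : ∀ (c : K) x, ρ (c • x) = ‖c‖ ^ d * ρ x) (hpos : ∀ x, x ≠ 0 → 0 < ρ x)
    {W : Submodule K V} (hW : W ≠ ⊤) : ∃ w ∉ W, ∀ z ∈ W, ρ w ≤ ρ (w - z) := by
  have := Fintype.ofFinite ι
  obtain ⟨y, hy⟩ := SetLike.exists_not_mem_of_ne_top W hW rfl
  let e := b.equivFun
  have hlim := tendsto_cocompact_atTop_of_smul_eq_norm_pow_mul hd hcont
    (fun c v ↦ by rw [map_smul, hsmul]) (fun v hv ↦ hpos _ (b.equivFun.symm.map_ne_zero_iff.2 hv))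
  let coset : Set (ι → K) := {v | v - e y ∈ W.comap e.symm.toLinearMap}
  have hclosed : IsClosed coset :=
    (Submodule.closed_of_finiteDimensional _).preimage (continuous_id.sub continuous_const)
  obtain ⟨v, hv, hmin⟩ := hcont.continuousOn.exists_isMinOn' hclosed (x₀ := e y) (by simp [coset])
    ((hlim.eventually_ge_atTop _).filter_mono inf_le_left)
  have hvy : e.symm v - y ∈ W := by simpa [coset] using hv
  refine ⟨e.symm v, fun hvW ↦ hy (by simpa using W.sub_mem hvW hvy), fun z hz ↦ ?_⟩
  have hmem : v - e z ∈ coset := by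
    simpa [coset, sub_right_comm] using W.sub_mem hvy hz
  calc ρ (e.symm v) ≤ ρ (e.symm (v - e z)) := hmin hmem
    _ = ρ (e.symm v - z) := by rw [map_sub, e.symm_apply_apply]

end HomogeneousFunction

section MultiplicativeFunction

variable {K : Type*} [NontriviallyNormedField K] [ProperSpace K] {ι : Type*} [Finite ι]
  {A : Type*} [Ring A] [Algebra K A]

/-- If `w` minimises `ρ` on a coset of `W` and `z ∈ W` has `ρ z = ρ w`, then `x = w * z⁻¹` works:
`ρ (x - t) = ρ (w - t • z) / ρ z` is at least `1`. -/
theorem exists_eq_one_forall_one_le_sub_algebraMap {d : ℕ} (b : Basis ι K A) (hd : d ≠ 0)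
    {ρ : A →*₀ ℝ} (hcont : Continuous fun v ↦ ρ (b.equivFun.symm v))
    (halg : ∀ c : K, ρ (algebraMap K A c) = ‖c‖ ^ d) (hpos : ∀ x, x ≠ 0 → 0 < ρ x)
    {W : Submodule K A} (hW : W ≠ ⊤)
    (hvalues : ∀ w, ∃ z ∈ W, ρ z = ρ w) :
    ∃ x, ρ x = 1 ∧ ∀ t : K, 1 ≤ ρ (x - algebraMap K A t) := by
  obtain ⟨w, hw, hmin⟩ := exists_notMem_forall_le_sub b hd hcont
    (fun c x ↦ by rw [Algebra.smul_def, map_mul, halg]) hpos hW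
  obtain ⟨z, hz, hzw⟩ := hvalues w
  have hρw : 0 < ρ w := hpos w (by rintro rfl; exact hw W.zero_mem)
  have := b.finiteDimensional_of_finite
  have hinj : Function.Injective (LinearMap.mulLeft K z) := by
    rw [← LinearMap.ker_eq_bot, LinearMap.ker_eq_bot']
    intro x hx
    by_contra hx0
    have := congr_arg ρ hx
    simp [hzw, hρw.ne', (hpos x hx0).ne'] at this
  obtain ⟨z', hz'⟩ := LinearMap.surjective_of_injective hinj 1
  have hρz' : ρ w * ρ z' = 1 := by simpa [hzw] using congr_arg ρ hz'
  refine ⟨w * z', by rw [map_mul, hρz'], fun t ↦ ?_⟩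
  have hfactor : w * z' - algebraMap K A t = (w - t • z) * z' := by
    have : z * z' = 1 := hz'
    rw [sub_mul, smul_mul_assoc, this, Algebra.algebraMap_eq_smul_one]
  rw [hfactor, map_mul, ← hρz']
  have := hmin _ (W.smul_mem t hz)
  gcongr
  exact pos_of_mul_pos_right (hρz'.trans_gt one_pos) hρw.le |>.le

/-- Either all values of `q` have square norm, or the norms that are not squares fill a single class
modulo squares, that of `q P`. So `q` attains all its norms on the span of `1` and `P`. -/
theorem exists_norm_eq_one_forall_one_le_norm_sub_algebraMap [IsUltrametricDist K]
    (b : Basis ι K A) {q : A →*₀ K} (hcont : Continuous fun v ↦ q (b.equivFun.symm v))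
    (halg : ∀ c, q (algebraMap K A c) = c ^ 2) (haniso : ∀ x, q x = 0 → x = 0)
    (hrank : 2 < finrank K A) :
    ∃ x, ‖q x‖ = 1 ∧ ∀ t, 1 ≤ ‖q (x - algebraMap K A t)‖ := by
  obtain ⟨P, hP⟩ : ∃ P : A, ∀ w, (∃ t : K, ‖q w‖ = ‖t‖ ^ 2) ∨ ∃ t : K, ‖q w‖ = ‖q P‖ * ‖t‖ ^ 2 := by
    by_cases h : ∃ P : A, ∀ t : K, ‖q P‖ ≠ ‖t‖ ^ 2
    · obtain ⟨P, hP⟩ := h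
      refine ⟨P, fun w ↦ ?_⟩
      rcases norm_eq_sq_or_norm_eq_sq_or_norm_eq_mul_sq (q w) (q P) with h | ⟨t, ht⟩ | h
      exacts [.inl h, absurd ht (hP t), .inr h]
    · push Not at h
      exact ⟨1, fun w ↦ .inl (h w)⟩
  have hW : Submodule.span K {1, P} ≠ ⊤ := by
    classical
    intro htop
    have hle := finrank_span_finset_le_card (R := K) ({1, P} : Finset A)
    rw [Finset.coe_pair, Set.finrank, htop, finrank_top] at hle
    exact (hle.trans Finset.card_le_two).not_gt hrank
  refine exists_eq_one_forall_one_le_sub_algebraMap b two_ne_zero (ρ := normHom.comp q)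
    hcont.norm (by simp [halg]) (fun x hx ↦ by simpa using mt (haniso x) hx) hW fun w ↦ ?_
  rcases hP w with ⟨t, ht⟩ | ⟨t, ht⟩
  · refine ⟨algebraMap K A t, ?_, by simp [halg, ht]⟩
    rw [Algebra.algebraMap_eq_smul_one]
    exact Submodule.smul_mem _ _ (Submodule.subset_span (by simp))
  · refine ⟨t • P, Submodule.smul_mem _ _ (Submodule.subset_span (by simp)), ?_⟩
    simp [Algebra.smul_def, halg, ht, mul_comm]

end MultiplicativeFunction

section Inert

variable {K : Type*} [NontriviallyNormedField K] {T N : K}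

/-- `X ^ 2 - T * X + N` is an inert polynomial: it has integral coefficients, unit constant term and
irreducible reduction to the residue field. This is expressed by norms over `K` itself; integrality
of `T` is `IsInert.norm_trace_le_one`. -/
structure IsInert (T N : K) : Prop where
  norm_eq_one : ‖N‖ = 1
  one_le_norm_eval (t : K) : 1 ≤ ‖t ^ 2 - T * t + N‖

theorem IsInert.norm_trace_le_one (h : IsInert T N) : ‖T‖ ≤ 1 := by
  by_contra! hT
  have hT0 : T ≠ 0 := norm_pos_iff.1 (one_pos.trans hT)
  have hval := h.one_le_norm_eval (N / T)
  rw [mul_div_cancel₀ _ hT0, sub_add_cancel, norm_pow, norm_div, h.norm_eq_one] at hval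
  exact (pow_lt_one₀ (by positivity) ((div_lt_one (by positivity)).2 hT) two_ne_zero).not_ge hval

variable [IsUltrametricDist K]

theorem IsInert.exists_irreducible_map_residue (h : IsInert T N) : ∃ T' N' : 𝒪[K], T' = T ∧
    N' = N ∧ Irreducible ((quadPoly T' N').map (residue 𝒪[K])) := by
  refine ⟨⟨T, Valued.integer.mem_iff.2 h.norm_trace_le_one⟩,
    ⟨N, Valued.integer.mem_iff.2 h.norm_eq_one.le⟩, rfl, rfl, ?_⟩
  rw [map_quadPoly, irreducible_quadPoly_iff]
  intro t ht
  obtain ⟨t, rfl⟩ := residue_surjective t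
  rw [← map_pow, ← map_mul, ← map_sub, ← map_add, residue_eq_zero_iff_norm_lt_one] at ht
  exact (h.one_le_norm_eval t).not_gt (by simpa using ht)

variable [ProperSpace K]

theorem IsInert.norm_disc_eq_one (h : IsInert T N) : ‖T ^ 2 - 4 * N‖ = 1 := by
  obtain ⟨T', N', rfl, rfl, hirr⟩ := h.exists_irreducible_map_residue
  rw [map_quadPoly] at hirr
  have hunit : IsUnit (T' ^ 2 - 4 * N') := by
    rw [← residue_ne_zero_iff_isUnit]
    simpa only [map_sub, map_mul, map_pow, map_ofNat] using
      disc_ne_zero_of_irreducible_quadPoly hirr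
  exact Valued.integer.isUnit_iff_norm_eq_one.1 hunit

theorem exists_normForm_eq_of_norm_eq_sq {c g : K} (hT : ‖T‖ ≤ 1)
    (hN : ‖N‖ = 1) (hdisc : ‖T ^ 2 - 4 * N‖ = 1) (hg : g ≠ 0) (hc : ‖c‖ = ‖g‖ ^ 2) :
    ∃ s t : K, s ^ 2 - T * s * t + N * t ^ 2 = c := by
  have hu : ‖c / g ^ 2‖ = 1 := by
    rw [norm_div, norm_pow, hc, div_self (pow_ne_zero 2 (norm_ne_zero_iff.2 hg))]
  have isUnit_of_norm_eq_one {x : 𝒪[K]} (hx : ‖(x : K)‖ = 1) : IsUnit x :=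
    Valued.integer.isUnit_iff_norm_eq_one.2 hx
  lift T to 𝒪[K] using Valued.integer.mem_iff.2 hT
  lift N to 𝒪[K] using Valued.integer.mem_iff.2 hN.le
  obtain ⟨s, t, hst⟩ := exists_normForm_eq_of_isUnit (isUnit_of_norm_eq_one hN)
    (isUnit_of_norm_eq_one (x := T ^ 2 - 4 * N) hdisc)
    (isUnit_of_norm_eq_one (x := ⟨c / g ^ 2, Valued.integer.mem_iff.2 hu.le⟩) hu)
  refine ⟨g * s, g * t, ?_⟩
  have hst' : (s : K) ^ 2 - T * s * t + N * t ^ 2 = c / g ^ 2 := by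
    simpa using congr_arg ((↑) : 𝒪[K] → K) hst
  rw [eq_div_iff (pow_ne_zero 2 hg)] at hst'
  linear_combination hst'

end Inert

section IntegerMap

variable (F E : Type*) [NontriviallyNormedField F] [IsUltrametricDist F]
  [NontriviallyNormedField E] [IsUltrametricDist E] [NormedAlgebra F E]

/-- The inclusion of the ring of integers of `F` into that of a normed field extension `E`. -/
noncomputable def integerMap : 𝒪[F] →+* 𝒪[E] :=
  (algebraMap F E).restrict 𝒪[F] 𝒪[E] fun x hx ↦ by
    simpa only [Valued.integer.mem_iff, norm_algebraMap'] using hx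

instance isLocalHom_integerMap : IsLocalHom (integerMap F E) where
  map_nonunit x hx := by
    rw [Valued.integer.isUnit_iff_norm_eq_one] at hx ⊢
    simpa [integerMap] using hx

end IntegerMap

section Minpoly

variable {F E : Type*} [NontriviallyNormedField F] [IsUltrametricDist F] [CompleteSpace F]
  [NontriviallyNormedField E] [NormedAlgebra F E]

theorem norm_eval_minpoly [Algebra.IsAlgebraic F E] (θ : E) (t : F) :
    ‖(minpoly F θ).eval t‖ = ‖θ - algebraMap F E t‖ ^ (minpoly F θ).natDegree := by
  have hdeg : (minpoly F (θ - algebraMap F E t)).natDegree = (minpoly F θ).natDegree := by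
    rw [minpoly.sub_algebraMap, natDegree_comp, natDegree_X_add_C, mul_one]
  have hpos : (minpoly F θ).natDegree ≠ 0 :=
    (minpoly.natDegree_pos (Algebra.IsIntegral.isIntegral θ)).ne'
  rw [NormedAlgebra.norm_eq_spectralNorm F (θ - _),
    spectralNorm.spectralNorm_eq_norm_coeff_zero_rpow, hdeg, one_div,
    Real.rpow_inv_natCast_pow (norm_nonneg _) hpos, minpoly.sub_algebraMap,
    coeff_zero_eq_eval_zero, eval_comp]
  simp

theorem exists_norm_eq_norm_pow_finrank [FiniteDimensional F E] (g : E) :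
    ∃ c : F, ‖c‖ = ‖g‖ ^ finrank F E := by
  obtain ⟨m, hm⟩ := minpoly.degree_dvd (Algebra.IsIntegral.isIntegral (R := F) g)
  refine ⟨(minpoly F g).eval 0 ^ m, ?_⟩
  rw [norm_pow, norm_eval_minpoly, map_zero, sub_zero, ← pow_mul, ← hm]

end Minpoly

section QuadraticExtension

variable {F E : Type*} [NontriviallyNormedField F] [IsUltrametricDist F] [ProperSpace F]
  [NontriviallyNormedField E] [NormedAlgebra F E]
  (hrank : finrank F E = 2)

include hrank

theorem exists_isInert_of_forall_exists_norm_eq (hvalues : ∀ g : E, ∃ t : F, ‖t‖ = ‖g‖) :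
    ∃ (T N : F) (θ : E), IsInert T N ∧ ‖θ‖ = 1 ∧
      θ ^ 2 - algebraMap F E T * θ + algebraMap F E N = 0 := by
  have : FiniteDimensional F E := Module.finite_of_finrank_pos (by lia)
  have hrange : LinearMap.range (Algebra.linearMap F E) ≠ ⊤ := fun htop ↦ by
    have := (Algebra.linearMap F E).finrank_range_le
    rw [htop, finrank_top, hrank, finrank_self] at this
    lia
  obtain ⟨θ, hθ_norm, hθ⟩ := exists_eq_one_forall_one_le_sub_algebraMap (finBasis F E) one_ne_zero
    (ρ := normHom) (continuous_norm.comp (LinearMap.continuous_of_finiteDimensional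
      (finBasis F E).equivFun.symm.toLinearMap)) (by simp)
    (fun x hx ↦ norm_pos_iff.2 hx) hrange fun w ↦ by
      obtain ⟨t, ht⟩ := hvalues w
      exact ⟨algebraMap F E t, ⟨t, rfl⟩, by simpa using ht⟩
  have hint : IsIntegral F θ := Algebra.IsIntegral.isIntegral θ
  have hdeg : (minpoly F θ).natDegree = 2 := by
    refine ((Nat.dvd_prime Nat.prime_two).1 (hrank ▸ minpoly.degree_dvd hint)).resolve_left ?_
    rw [minpoly.natDegree_eq_one_iff]
    rintro ⟨t, rfl⟩
    simpa using (hθ t).trans_lt' zero_lt_one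
  obtain ⟨T, N, hTN⟩ := exists_eq_quadPoly_of_monic (minpoly.monic hint) hdeg
  have hnorm (t : F) : ‖t ^ 2 - T * t + N‖ = ‖θ - algebraMap F E t‖ ^ 2 := by
    rw [← eval_quadPoly, ← hTN, norm_eval_minpoly, hdeg]
  refine ⟨T, N, θ, ⟨by simpa [show ‖θ‖ = 1 from hθ_norm] using hnorm 0, fun t ↦ ?_⟩, hθ_norm, ?_⟩
  · exact hnorm t ▸ one_le_pow₀ (hθ t)
  · rw [← eval_quadPoly, ← map_quadPoly, eval_map_algebraMap, ← hTN, minpoly.aeval]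

theorem IsInert.exists_root_of_forall_exists_norm_eq [IsUltrametricDist E] [ProperSpace E] {T N : F}
    (h : IsInert T N) (hvalues : ∀ g : E, ∃ t : F, ‖t‖ = ‖g‖) :
    ∃ w : E, w ^ 2 - algebraMap F E T * w + algebraMap F E N = 0 := by
  obtain ⟨T₁, N₁, θ, h₁, hθ_norm, hθ⟩ :=
    exists_isInert_of_forall_exists_norm_eq hrank hvalues
  obtain ⟨T, N, rfl, rfl, hirr⟩ := h.exists_irreducible_map_residue
  obtain ⟨T₁, N₁, rfl, rfl, hirr₁⟩ := h₁.exists_irreducible_map_residue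
  lift θ to 𝒪[E] using Valued.integer.mem_iff.2 hθ_norm.le
  obtain ⟨w, hw⟩ := exists_isRoot_map_of_natDegree_dvd (integerMap F E) (monic_quadPoly T N) hirr
    (monic_quadPoly T₁ N₁) hirr₁ (by simp only [natDegree_quadPoly, dvd_rfl]) (θ := θ) (by
      rw [IsRoot, map_quadPoly, eval_quadPoly]
      exact Subtype.ext hθ)
  rw [IsRoot, map_quadPoly, eval_quadPoly] at hw
  exact ⟨w, congr_arg Subtype.val hw⟩

theorem exists_norm_eq_sq_of_forall_norm_ne {g : E} (hg : ∀ t : F, ‖t‖ ≠ ‖g‖) (c : F) :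
    ∃ x : E, ‖c‖ = ‖x‖ ^ 2 := by
  have : FiniteDimensional F E := Module.finite_of_finrank_pos (by lia)
  obtain ⟨d, hd⟩ := exists_norm_eq_norm_pow_finrank (F := F) g
  rw [hrank] at hd
  rcases norm_eq_sq_or_norm_eq_sq_or_norm_eq_mul_sq c d with ⟨t, ht⟩ | ⟨t, ht⟩ | ⟨t, ht⟩
  · exact ⟨algebraMap F E t, by simpa using ht⟩
  · rw [hd, sq_eq_sq₀ (norm_nonneg _) (norm_nonneg _)] at ht
    exact absurd ht.symm (hg t)
  · exact ⟨g * algebraMap F E t, by rw [ht, hd, norm_mul, norm_algebraMap', mul_pow]⟩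

theorem IsInert.exists_root_or_forall_exists_normForm_eq [IsUltrametricDist E] [ProperSpace E]
    {T N : F} (h : IsInert T N) :
    (∃ w : E, w ^ 2 - algebraMap F E T * w + algebraMap F E N = 0) ∨ ∀ c : F, ∃ s t : E,
      s ^ 2 - algebraMap F E T * s * t + algebraMap F E N * t ^ 2 = algebraMap F E c := by
  by_cases hvalues : ∀ g : E, ∃ t : F, ‖t‖ = ‖g‖
  · exact .inl <| h.exists_root_of_forall_exists_norm_eq hrank hvalues
  push Not at hvalues
  obtain ⟨g, hg⟩ := hvalues
  refine .inr fun c ↦ ?_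
  obtain ⟨x, hx⟩ := exists_norm_eq_sq_of_forall_norm_ne hrank hg c
  rcases eq_or_ne x 0 with rfl | hx0
  · obtain rfl : c = 0 := by simpa using hx
    exact ⟨0, 0, by simp⟩
  refine exists_normForm_eq_of_norm_eq_sq (g := x) ?_ ?_ ?_ hx0 ?_
  · rw [norm_algebraMap']; exact h.norm_trace_le_one
  · rw [norm_algebraMap', h.norm_eq_one]
  · rw [← h.norm_disc_eq_one, ← norm_algebraMap' E (T ^ 2 - _)]
    simp only [map_sub, map_mul, map_pow, map_ofNat]
  · rw [norm_algebraMap', hx]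

end QuadraticExtension

section Quaternion

open QuaternionAlgebra

variable {R : Type*} [CommRing R] {a b : R}

/-- The reduced norm of the quaternion algebra `(a, b)` over `R`, as a multiplicative map. -/
def reducedNorm : ℍ[R,a,b] →*₀ R where
  toFun x := x.re ^ 2 - a * x.imI ^ 2 - b * x.imJ ^ 2 + a * b * x.imK ^ 2
  map_zero' := by simp
  map_one' := by simp
  map_mul' x y := by
    simp only [re_mul, imI_mul, imJ_mul, imK_mul]
    ring

theorem reducedNorm_apply (x : ℍ[R,a,b]) :
    reducedNorm x = x.re ^ 2 - a * x.imI ^ 2 - b * x.imJ ^ 2 + a * b * x.imK ^ 2 := rfl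

theorem reducedNorm_algebraMap (c : R) : reducedNorm (algebraMap R ℍ[R,a,b] c) = c ^ 2 := by
  simp [reducedNorm_apply, QuaternionAlgebra.algebraMap_eq]

theorem reducedNorm_sub_algebraMap (x : ℍ[R,a,b]) (t : R) :
    reducedNorm (x - algebraMap R ℍ[R,a,b] t) = t ^ 2 - 2 * x.re * t + reducedNorm x := by
  simp only [QuaternionAlgebra.algebraMap_eq, reducedNorm_apply, re_sub, imI_sub, imJ_sub, imK_sub]
  ring

theorem reducedNorm_algebraMap_sub_smul_add {x y : ℍ[R,a,b]} (hy : y.re = 0)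
    (hxy : (x * y).re = 0) (s t : R) :
    reducedNorm (algebraMap R ℍ[R,a,b] s - t • x + y) =
      s ^ 2 - 2 * x.re * s * t + reducedNorm x * t ^ 2 + reducedNorm y := by
  rw [re_mul, hy] at hxy
  simp only [QuaternionAlgebra.algebraMap_eq, reducedNorm_apply, re_add, re_sub, re_smul, imI_add,
    imI_sub, imI_smul, imJ_add, imJ_sub, imJ_smul, imK_add, imK_sub, imK_smul, smul_eq_mul, hy]
  linear_combination 2 * t * hxy

theorem reducedNorm_eq_zero_of_algebraMap_sub_smul_add_eq_zero {x y : ℍ[R,a,b]}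
    (hy : y.re = 0) (hxy : (x * y).re = 0) {s t : R}
    (h : algebraMap R ℍ[R,a,b] s - t • x + y = 0) : reducedNorm y = 0 := by
  have hsum : s * y.re - t * (x * y).re + (y * y).re = 0 := by
    simpa [QuaternionAlgebra.algebraMap_eq, add_mul, sub_mul] using congr_arg (fun z ↦ (z * y).re) h
  have hyy : (y * y).re = 0 := by simpa [hy, hxy] using hsum
  rw [re_mul, hy] at hyy
  rw [reducedNorm_apply, hy]
  linear_combination -hyy

theorem exists_ne_zero_re_eq_zero_mul_re_eq_zero [Nontrivial R] (x : ℍ[R,a,b]) :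
    ∃ y : ℍ[R,a,b], y ≠ 0 ∧ y.re = 0 ∧ (x * y).re = 0 := by
  by_cases hx : a * x.imI = 0
  · exact ⟨⟨0, 1, 0, 0⟩, fun h ↦ one_ne_zero (congr_arg (·.imI) h), rfl, by simp [hx]⟩
  · exact ⟨⟨0, b * x.imJ, -(a * x.imI), 0⟩,
      fun h ↦ hx (neg_eq_zero.1 (congr_arg (·.imJ) h)), rfl, by rw [re_mul]; ring⟩

/-- The map `(a, b)_R → (a, b)_S` of quaternion algebras induced by extension of scalars from `R` to
`S`, a homomorphism of rings. -/
def baseChange (S : Type*) [CommRing S] [Algebra R S] :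
    ℍ[R,a,b] →+* ℍ[S,algebraMap R S a,algebraMap R S b] where
  toFun x :=
    ⟨algebraMap R S x.re, algebraMap R S x.imI, algebraMap R S x.imJ, algebraMap R S x.imK⟩
  map_zero' := by ext <;> simp
  map_one' := by ext <;> simp
  map_add' x y := by ext <;> simp
  map_mul' x y := by ext <;> simp

section BaseChange

variable (S : Type*) [CommRing S] [Algebra R S]

@[simp]
theorem re_baseChange (x : ℍ[R,a,b]) : (baseChange S x).re = algebraMap R S x.re := rfl

theorem reducedNorm_baseChange (x : ℍ[R,a,b]) :
    reducedNorm (baseChange S x) = algebraMap R S (reducedNorm x) := by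
  simp [reducedNorm_apply, baseChange]

theorem baseChange_injective [FaithfulSMul R S] :
    Function.Injective (baseChange S : ℍ[R,a,b] → _) := by
  have hinj := FaithfulSMul.algebraMap_injective R S
  exact fun x y h ↦ QuaternionAlgebra.ext (hinj (congr_arg (·.re) h))
    (hinj (congr_arg (·.imI) h)) (hinj (congr_arg (·.imJ) h)) (hinj (congr_arg (·.imK) h))

theorem eq_algebraMap_re_of_baseChange_eq_algebraMap [FaithfulSMul R S] {x : ℍ[R,a,b]} {w : S}
    (h : baseChange S x = algebraMap S _ w) : x = algebraMap R _ x.re := by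
  have hinj := FaithfulSMul.algebraMap_injective R S
  ext
  · rfl
  · exact hinj (by simpa [baseChange, QuaternionAlgebra.algebraMap_eq] using congr_arg (·.imI) h)
  · exact hinj (by simpa [baseChange, QuaternionAlgebra.algebraMap_eq] using congr_arg (·.imJ) h)
  · exact hinj (by simpa [baseChange, QuaternionAlgebra.algebraMap_eq] using congr_arg (·.imK) h)

end BaseChange

theorem exists_isInert_two_mul_re_reducedNorm {F : Type*} [NontriviallyNormedField F]
    [IsUltrametricDist F] [ProperSpace F] {a b : F}
    (haniso : ∀ x : ℍ[F,a,b], reducedNorm x = 0 → x = 0) :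
    ∃ x : ℍ[F,a,b], IsInert (2 * x.re) (reducedNorm x) := by
  obtain ⟨x, hx, hx'⟩ := exists_norm_eq_one_forall_one_le_norm_sub_algebraMap
    (QuaternionAlgebra.basisOneIJK a 0 b) (q := reducedNorm)
    (by
      simp only [reducedNorm_apply, QuaternionAlgebra.basisOneIJK, Basis.equivFun_ofEquivFun]
      change Continuous fun v : Fin 4 → F ↦ v 0 ^ 2 - a * v 1 ^ 2 - b * v 2 ^ 2 + a * b * v 3 ^ 2
      fun_prop) reducedNorm_algebraMap haniso
    (by rw [QuaternionAlgebra.finrank_eq_four]; norm_num)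
  refine ⟨x, hx, fun t ↦ ?_⟩
  rw [← reducedNorm_sub_algebraMap]
  exact hx' t

theorem exists_ne_zero_reducedNorm_eq_zero_of_normedAlgebra {F E : Type*}
    [NontriviallyNormedField F] [IsUltrametricDist F] [ProperSpace F] [NontriviallyNormedField E]
    [IsUltrametricDist E] [ProperSpace E] [NormedAlgebra F E] (hrank : finrank F E = 2) (a b : F) :
    ∃ z : ℍ[E,algebraMap F E a,algebraMap F E b], z ≠ 0 ∧ reducedNorm z = 0 := by
  have ne_zero {x : ℍ[F,a,b]} (hx : x ≠ 0) : baseChange E x ≠ 0 :=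
    (map_ne_zero_iff _ (baseChange_injective E)).2 hx
  by_cases haniso : ∀ x : ℍ[F,a,b], reducedNorm x = 0 → x = 0
  swap
  · push Not at haniso
    obtain ⟨x, hx, hx0⟩ := haniso
    exact ⟨baseChange E x, ne_zero hx0, by rw [reducedNorm_baseChange, hx, map_zero]⟩
  obtain ⟨x, hx⟩ := exists_isInert_two_mul_re_reducedNorm haniso
  rcases hx.exists_root_or_forall_exists_normForm_eq (E := E) hrank with ⟨w, hw⟩ | hnorm
  · refine ⟨baseChange E x - algebraMap E _ w, fun h ↦ ?_, ?_⟩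
    · have hval := hx.one_le_norm_eval x.re
      rw [← reducedNorm_sub_algebraMap,
        ← eq_algebraMap_re_of_baseChange_eq_algebraMap E (sub_eq_zero.1 h), sub_self, map_zero,
        norm_zero] at hval
      exact zero_lt_one.not_ge hval
    · rw [reducedNorm_sub_algebraMap, reducedNorm_baseChange, re_baseChange, ← hw, map_mul,
        map_ofNat]
  · obtain ⟨y, hy0, hy, hxy⟩ := exists_ne_zero_re_eq_zero_mul_re_eq_zero x
    obtain ⟨s, t, hst⟩ := hnorm (-reducedNorm y)
    have hyE : (baseChange E y).re = 0 := by rw [re_baseChange, hy, map_zero]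
    have hxyE : (baseChange E x * baseChange E y).re = 0 := by
      rw [← map_mul, re_baseChange, hxy, map_zero]
    refine ⟨algebraMap E _ s - t • baseChange E x + baseChange E y, fun h ↦ hy0 (haniso y ?_), ?_⟩
    · have hnorm_y := reducedNorm_eq_zero_of_algebraMap_sub_smul_add_eq_zero hyE hxyE h
      rwa [reducedNorm_baseChange, map_eq_zero] at hnorm_y
    · rw [reducedNorm_algebraMap_sub_smul_add hyE hxyE, re_baseChange, reducedNorm_baseChange,
        reducedNorm_baseChange]
      simp only [map_mul, map_ofNat, map_neg] at hst
      linear_combination hst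

theorem exists_ne_zero_reducedNorm_eq_zero {F E : Type*} [NontriviallyNormedField F]
    [IsUltrametricDist F] [ProperSpace F] [Field E] [Algebra F E] (hrank : finrank F E = 2)
    (a b : F) : ∃ z : ℍ[E,algebraMap F E a,algebraMap F E b], z ≠ 0 ∧ reducedNorm z = 0 := by
  have : FiniteDimensional F E := Module.finite_of_finrank_pos (by lia)
  let : NontriviallyNormedField E := spectralNorm.nontriviallyNormedField F E
  let : NormedAlgebra F E := spectralNorm.normedAlgebra F E
  have : ProperSpace E := FiniteDimensional.proper F E
  have : IsUltrametricDist E := .isUltrametricDist_of_forall_norm_add_le_max_norm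
    (isNonarchimedean_spectralNorm (K := F))
  exact exists_ne_zero_reducedNorm_eq_zero_of_normedAlgebra hrank a b

end Quaternion

section Biquadratic

theorem exists_mem_fixedField_apply_ne {F L : Type*} [Field F] [Field L] [Algebra F L]
    [FiniteDimensional F L] {H : Subgroup Gal(L/F)} {τ : Gal(L/F)} (hτ : τ ∉ H) :
    ∃ z ∈ IntermediateField.fixedField H, τ z ≠ z := by
  contrapose! hτ
  rw [← IntermediateField.fixingSubgroup_fixedField H, IntermediateField.mem_fixingSubgroup_iff]
  exact hτ

theorem isKleinFour_of_mulEquiv {G H : Type*} [Group G] [Group H] [IsKleinFour H] (φ : G ≃* H) :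
    IsKleinFour G where
  card_four := by rw [Nat.card_congr φ.toEquiv, IsKleinFour.card_four]
  exponent_two := by rw [Monoid.exponent_eq_of_mulEquiv φ, IsKleinFour.exponent_two]

theorem exists_notMem_zpowers_of_isKleinFour {G : Type*} [Group G] [IsKleinFour G] {τ : G}
    (hτ : τ ≠ 1) : ∃ σ : G, σ ≠ 1 ∧ σ ≠ τ ∧ τ ∉ Subgroup.zpowers σ := by
  have := IsKleinFour.instFinite (G := G)
  obtain ⟨σ, hσ, hστ⟩ := ENat.exists_ne_ne_of_three_le (α := G)
    (by rw [ENat.card_eq_coe_natCard, IsKleinFour.card_four]; norm_num) 1 τ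
  refine ⟨σ, hσ, hστ, fun hmem ↦ ?_⟩
  obtain ⟨n, rfl⟩ := Subgroup.mem_zpowers_iff.1 hmem
  have hsq : σ ^ (2 : ℤ) = 1 := by rw [zpow_two, IsKleinFour.mul_self]
  obtain ⟨m, rfl | rfl⟩ := n.even_or_odd'
  · exact hτ (by rw [zpow_mul, hsq, one_zpow])
  · exact hστ (by rw [zpow_add_one, zpow_mul, hsq, one_zpow, one_mul])

theorem exists_ne_zero_apply_eq_neg_sq_eq_algebraMap {F L : Type*} [Field F] [Field L]
    [Algebra F L] [IsGalois F L] [FiniteDimensional F L] [IsKleinFour Gal(L/F)]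
    {τ : Gal(L/F)} (hτ : τ ≠ 1) :
    ∃ (e : F) (f : L), f ≠ 0 ∧ τ f = -f ∧ f ^ 2 = algebraMap F L e := by
  obtain ⟨σ, hσ, hστ, hτσ⟩ := exists_notMem_zpowers_of_isKleinFour hτ
  obtain ⟨z, hz, hτz⟩ := exists_mem_fixedField_apply_ne hτσ
  have hσz : σ z = z := (IntermediateField.mem_fixedField_iff _ z).1 hz σ (Subgroup.mem_zpowers σ)
  have hcomm : σ (τ z) = τ (σ z) :=
    DFunLike.congr_fun (mul_comm_of_exponent_two IsKleinFour.exponent_two σ τ) z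
  have hτf : τ (z - τ z) = -(z - τ z) := by
    have hττ : τ (τ z) = z := DFunLike.congr_fun (IsKleinFour.mul_self τ) z
    rw [map_sub, hττ, neg_sub]
  have hσf : σ (z - τ z) = z - τ z := by rw [map_sub, hcomm, hσz]
  have hfixed (g : Gal(L/F)) : g ((z - τ z) ^ 2) = (z - τ z) ^ 2 := by
    rw [map_pow, sq_eq_sq_iff_eq_or_eq_neg]
    by_cases h1 : g = 1
    · exact .inl (by rw [h1, AlgEquiv.one_apply])
    by_cases h2 : g = σ
    · exact .inl (by rw [h2, hσf])
    by_cases h3 : g = τ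
    · exact .inr (by rw [h3, hτf])
    rw [IsKleinFour.eq_mul_of_ne_all hσ hτ hστ h1 h2 h3]
    exact .inr (by rw [AlgEquiv.mul_apply, hτf, map_neg, hσf])
  obtain ⟨e, he⟩ := (IsGalois.mem_range_algebraMap_iff_fixed _).2 hfixed
  exact ⟨e, z - τ z, sub_ne_zero.2 hτz.symm, hτf, he.symm⟩

variable {E L : Type*} [Field E] [Field L] [Algebra E L]

theorem exists_algebraMap_norm_eq_mul_apply [IsGalois E L] (hrank : finrank E L = 2) :
    ∃ τ : Gal(L/E), τ ≠ 1 ∧ ∀ x, algebraMap E L (Algebra.norm E x) = x * τ x := by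
  classical
  have : FiniteDimensional E L := Module.finite_of_finrank_pos (by lia)
  obtain ⟨τ, hτ, huniq⟩ := (Nat.card_eq_two_iff' (1 : Gal(L/E))).1 (by
    rw [IsGalois.card_aut_eq_finrank, hrank])
  have huniv : (Finset.univ : Finset Gal(L/E)) = {1, τ} := by
    ext g
    simpa using or_iff_not_imp_left.2 (huniq g)
  refine ⟨τ, hτ, fun x ↦ ?_⟩
  rw [Algebra.norm_eq_prod_automorphisms, huniv, Finset.prod_pair hτ.symm, AlgEquiv.one_apply]

theorem exists_norm_eq_of_reducedNorm_eq_zero [FiniteDimensional E L] (h2 : (2 : L) ≠ 0)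
    {τ : Gal(L/E)} (hnorm : ∀ x, algebraMap E L (Algebra.norm E x) = x * τ x) {e : E} {f : L}
    (hf : f ≠ 0) (hτf : τ f = -f) (hfe : f ^ 2 = algebraMap E L e) {a : E} {z : ℍ[E,e,a]}
    (hz : z ≠ 0) (hz_norm : reducedNorm z = 0) : ∃ x : L, Algebra.norm E x = a := by
  let ofPair (x y : E) : L := algebraMap E L x + algebraMap E L y * f
  have norm_ofPair (x y : E) : Algebra.norm E (ofPair x y) = x ^ 2 - e * y ^ 2 := by
    apply (algebraMap E L).injective
    simp only [hnorm, ofPair, map_add, map_sub, map_mul, map_pow, τ.commutes, hτf, ← hfe]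
    ring
  have ofPair_eq_zero {x y : E} (h : ofPair x y = 0) : x = 0 ∧ y = 0 := by
    have hτ : algebraMap E L x - algebraMap E L y * f = 0 := by
      simpa [ofPair, hτf, sub_eq_add_neg] using congr_arg τ h
    have hx : 2 * algebraMap E L x = 0 := by linear_combination h + hτ
    have hy : 2 * f * algebraMap E L y = 0 := by linear_combination h - hτ
    simpa [h2, hf] using And.intro hx hy
  have hprod : Algebra.norm E (ofPair z.re z.imI) = a * Algebra.norm E (ofPair z.imJ z.imK) := by
    rw [norm_ofPair, norm_ofPair]
    rw [reducedNorm_apply] at hz_norm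
    linear_combination hz_norm
  have hden : ofPair z.imJ z.imK ≠ 0 := by
    intro h
    rw [h, Algebra.norm_zero, mul_zero, Algebra.norm_eq_zero_iff] at hprod
    obtain ⟨hJ, hK⟩ := ofPair_eq_zero h
    obtain ⟨hre, hI⟩ := ofPair_eq_zero hprod
    exact hz (QuaternionAlgebra.ext hre hI hJ hK)
  refine ⟨ofPair z.re z.imI / ofPair z.imJ z.imK,
    mul_right_cancel₀ (Algebra.norm_ne_zero_iff.2 hden) ?_⟩
  rw [← map_mul, div_mul_cancel₀ _ hden, hprod]

end Biquadratic

section Main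

theorem exists_norm_eq_algebraMap {F E L : Type*} [NontriviallyNormedField F]
    [IsUltrametricDist F] [ProperSpace F] [Field E] [Field L] [Algebra F E] [Algebra E L]
    [Algebra F L] [IsScalarTower F E L] [IsGalois F L] [IsKleinFour Gal(L/F)] (h2 : (2 : F) ≠ 0)
    (hrank : finrank F E = 2) (a : F) :
    ∃ x : L, Algebra.norm E x = algebraMap F E a := by
  have := IsKleinFour.instFinite (G := Gal(L/F))
  have := IsGalois.finiteDimensional_of_finite F L
  have hrank_L : finrank F L = 4 := by
    rw [← IsGalois.card_aut_eq_finrank, IsKleinFour.card_four]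
  have : FiniteDimensional F E := Module.finite_of_finrank_pos (by lia)
  have : FiniteDimensional E L := .of_restrictScalars_finite F E L
  have : IsGalois E L := .tower_top_of_isGalois F E L
  have hrank_LE : finrank E L = 2 := by
    have := finrank_mul_finrank F E L
    lia
  obtain ⟨τ, hτ, hnorm⟩ := exists_algebraMap_norm_eq_mul_apply hrank_LE
  obtain ⟨e, f, hf, hτf, hfe⟩ := exists_ne_zero_apply_eq_neg_sq_eq_algebraMap
    (τ := τ.restrictScalars F) (fun h ↦ hτ (AlgEquiv.restrictScalars_injective F h))
  obtain ⟨z, hz, hz_norm⟩ := exists_ne_zero_reducedNorm_eq_zero hrank e a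
  have h2L : (2 : L) ≠ 0 := by
    rw [← map_ofNat (algebraMap F L) 2]
    exact (_root_.map_ne_zero _).2 h2
  exact exists_norm_eq_of_reducedNorm_eq_zero h2L hnorm hf hτf
    (by rw [hfe, IsScalarTower.algebraMap_apply F E L]) hz hz_norm

theorem stmt_0_general (K : Type*) [NontriviallyNormedField K] [IsUltrametricDist K]
    [ProperSpace K] (h2 : (2 : K) ≠ 0) (F E L : Type*) [Field F] [Field E] [Field L]
    [Algebra K F] [FiniteDimensional K F]
    [Algebra F E] [Algebra E L] [Algebra F L] [IsScalarTower F E L] [IsGalois F L]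
    (hKlein : Nonempty (Gal(L/F) ≃* Multiplicative (ZMod 2 × ZMod 2)))
    (hquad : finrank F E = 2) (a : F) :
    ∃ x : L, Algebra.norm E x = algebraMap F E a := by
  obtain ⟨φ⟩ := hKlein
  have : IsKleinFour Gal(L/F) := isKleinFour_of_mulEquiv φ
  let : NontriviallyNormedField F := spectralNorm.nontriviallyNormedField K F
  let : NormedAlgebra K F := spectralNorm.normedAlgebra K F
  have : ProperSpace F := FiniteDimensional.proper K F
  have : IsUltrametricDist F := .isUltrametricDist_of_forall_norm_add_le_max_norm
    (isNonarchimedean_spectralNorm (K := K))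
  have h2F : (2 : F) ≠ 0 := by
    rw [← map_ofNat (algebraMap K F) 2]
    exact (_root_.map_ne_zero _).2 h2
  exact exists_norm_eq_algebraMap h2F hquad a

end Main

/-- Let `L/F` be a Galois extension of non-archimedean local fields of
characteristic zero (finite extensions of `ℚ_[p]`) whose Galois group is isomorphic to the
Klein four-group `ℤ/2 × ℤ/2`, and let `E` be a quadratic extension of `F` contained in `L`.
Then every element of `F^×` is a norm from `L` to `E`. -/
theorem stmt_0 (p : ℕ) [Fact p.Prime]
    (F E L : Type) [Field F] [Field E] [Field L]
    [Algebra ℚ_[p] F] [FiniteDimensional ℚ_[p] F]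
    [Algebra ℚ_[p] E] [FiniteDimensional ℚ_[p] E]
    [Algebra ℚ_[p] L] [FiniteDimensional ℚ_[p] L]
    [Algebra F E] [Algebra E L] [Algebra F L] [IsScalarTower F E L]
    [IsScalarTower ℚ_[p] F E] [IsScalarTower ℚ_[p] E L]
    [IsGalois F L]
    (hKlein : Nonempty ((L ≃ₐ[F] L) ≃* Multiplicative (ZMod 2 × ZMod 2)))
    (hquad : Module.finrank F E = 2)
    (a : F) (ha : a ≠ 0) :
    ∃ x : L, Algebra.norm E x = algebraMap F E a :=
  stmt_0_general ℚ_[p] two_ne_zero F E L hKlein hquad a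
end

section
/- Let K/k be a quadratic extension of non-archimedean local fields of characteristic zero with Galois involution ρ, let ε ∈ {±1}, n ≥ 1, and let y ∈ GL_n(K) satisfy transpose(ρ(y)) = ε·y (ρ applied entrywise). Then for every a ∈ K^× with a·ρ(a) = 1 there exists h ∈ GL_n(K) with transpose(ρ(h))·y·h = y and det h = a. -/
open Matrix

/-!
An `ε`-hermitian form `B ≠ 0` over a nontrivial involution is not alternating, so some vector `v`
has `B v v ≠ 0`. The map that multiplies `v` by `a` and fixes the orthogonal complement of `v`
then has determinant `a`, and it preserves `B` because `a * σ a = 1`.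
-/

section AlternatingSesquilinear

variable {R M N : Type*} [CommRing R] [IsDomain R] [AddCommGroup M] [Module R M]
  [AddCommGroup N] [Module R N] [Module.IsTorsionFree R N] {σ : R →+* R}

theorem eq_zero_of_isAlt_of_ne_id (hσ : σ ≠ RingHom.id R) {B : M →ₛₗ[σ] M →ₗ[R] N}
    (hB : B.IsAlt) : B = 0 := by
  obtain ⟨t, ht⟩ : ∃ t, σ t ≠ t := by
    by_contra! h
    exact hσ (RingHom.ext h)
  ext u v
  have hscale : t • B u v = σ t • B u v := by
    calc t • B u v = B u (t • v) := by rw [map_smul]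
      _ = -B (t • v) u := (hB.neg _ _).symm
      _ = σ t • -B v u := by rw [LinearMap.map_smulₛₗ₂, smul_neg]
      _ = σ t • B u v := by rw [hB.neg]
  have hzero : (t - σ t) • B u v = 0 := by rw [sub_smul, hscale, sub_self]
  exact (smul_eq_zero.mp hzero).resolve_left (sub_ne_zero.mpr ht.symm)

end AlternatingSesquilinear

/-- A form `B`, `σ`-semilinear in its first variable, is `ε`-hermitian if `σ (B x y) = ε * B y x`.
Hermitian forms are the case `ε = 1`, skew-hermitian forms the case `ε = -1`. -/
def IsEpsilonHermitian {R M : Type*} [CommSemiring R] [AddCommMonoid M] [Module R M]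
    {σ : R →+* R} (ε : R) (B : M →ₛₗ[σ] M →ₗ[R] R) : Prop :=
  ∀ x y, σ (B x y) = ε * B y x

section QuasiReflection

variable {K V : Type*} [Field K] [AddCommGroup V] [Module K V] {σ : K →+* K}

/-- The quasi-reflection of ratio `a` along a vector `v` with `B v v ≠ 0`: it multiplies `v` by `a`
and fixes every `x` with `B v x = 0`. If `B v v = 0` it is the identity, since then
`(a - 1) / B v v = 0`. -/
noncomputable def quasiReflection (B : V →ₛₗ[σ] V →ₗ[K] K) (v : V) (a : K) : V →ₗ[K] V :=
  LinearMap.transvection (((a - 1) / B v v) • B v) v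

variable {B : V →ₛₗ[σ] V →ₗ[K] K} {v : V} {a ε : K}

theorem quasiReflection_apply (x : V) :
    quasiReflection B v a x = x + ((a - 1) / B v v * B v x) • v :=
  rfl

theorem det_quasiReflection [FiniteDimensional K V] (hv : B v v ≠ 0) :
    LinearMap.det (quasiReflection B v a) = a := by
  rw [quasiReflection, LinearMap.transvection.det, LinearMap.smul_apply, smul_eq_mul,
    div_mul_cancel₀ _ hv, add_sub_cancel]

theorem IsEpsilonHermitian.apply_quasiReflection (hB : IsEpsilonHermitian ε B) (hv : B v v ≠ 0)
    (ha : a * σ a = 1) (x y : V) :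
    B (quasiReflection B v a x) (quasiReflection B v a y) = B x y := by
  simp only [quasiReflection_apply]
  set c := (a - 1) / B v v
  have hc : c * B v v = a - 1 := div_mul_cancel₀ _ hv
  have hσc : σ c * (ε * B v v) = σ a - 1 := by rw [← hB, ← map_mul, hc, map_sub, map_one]
  have hcoeff : c + σ c * ε + σ c * ε * c * B v v = 0 := by
    refine (mul_eq_zero.mp ?_).resolve_right hv
    linear_combination ha + (1 + σ c * ε * B v v) * hc + a * hσc
  simp only [map_add, LinearMap.add_apply, map_smul, LinearMap.map_smulₛₗ₂, smul_eq_mul, map_mul,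
    hB v x]
  linear_combination B x v * B v y * hcoeff

end QuasiReflection

section ExistsDet

variable {K V : Type*} [Field K] [AddCommGroup V] [Module K V] [FiniteDimensional K V]
  [Nontrivial V] {σ : K →+* K}

variable (V) in
theorem exists_linearMap_det_eq (a : K) : ∃ h : V →ₗ[K] V, LinearMap.det h = a := by
  obtain ⟨v, hv⟩ := exists_ne (0 : V)
  obtain ⟨f, hf⟩ := Module.Projective.exists_dual_eq_one K hv
  refine ⟨LinearMap.transvection ((a - 1) • f) v, ?_⟩
  rw [LinearMap.transvection.det, LinearMap.smul_apply, hf, smul_eq_mul, mul_one, add_sub_cancel]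

theorem IsEpsilonHermitian.exists_isometry_det_eq (hσ : σ ≠ RingHom.id K) {ε : K}
    {B : V →ₛₗ[σ] V →ₗ[K] K} (hB : IsEpsilonHermitian ε B) {a : K} (ha : a * σ a = 1) :
    ∃ h : V →ₗ[K] V, (∀ x y, B (h x) (h y) = B x y) ∧ LinearMap.det h = a := by
  by_cases hB₀ : B = 0
  · obtain ⟨h, hdet⟩ := exists_linearMap_det_eq V a
    exact ⟨h, fun x y => by simp only [hB₀, LinearMap.zero_apply], hdet⟩
  · obtain ⟨v, hv⟩ : ∃ v, B v v ≠ 0 := by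
      by_contra! hB_alt
      exact hB₀ (eq_zero_of_isAlt_of_ne_id hσ hB_alt)
    exact ⟨quasiReflection B v a, hB.apply_quasiReflection hv ha, det_quasiReflection hv⟩

end ExistsDet

section MatrixForms

variable {R ι ι' κ κ' : Type*} [CommSemiring R] [Fintype ι] [Fintype ι'] {σ : R →+* R}

theorem map_comp_mulVec (A : Matrix κ ι R) (v : ι → R) : σ ∘ (A *ᵥ v) = A.map σ *ᵥ (σ ∘ v) :=
  funext (RingHom.map_mulVec σ A v)

variable [DecidableEq ι] [DecidableEq ι']

theorem toLinearMapₛₗ₂'_apply_eq_dotProduct (y : Matrix ι ι' R) (u : ι → R) (v : ι' → R) :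
    y.toLinearMapₛₗ₂' R σ (RingHom.id R) u v = (σ ∘ u) ⬝ᵥ y *ᵥ v := by
  simp only [Matrix.toLinearMapₛₗ₂'_apply, dotProduct, mulVec, Finset.mul_sum, smul_eq_mul,
    RingHom.id_apply, Function.comp_apply, mul_comm (v _)]

theorem isEpsilonHermitian_toLinearMapₛₗ₂' (hσ : Function.Involutive σ) {ε : R}
    {y : Matrix ι ι R} (hy : (y.map σ)ᵀ = ε • y) :
    IsEpsilonHermitian ε (y.toLinearMapₛₗ₂' R σ (RingHom.id R)) := by
  intro u v
  have hσu : σ ∘ σ ∘ u = u := funext fun i => hσ (u i)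
  calc σ (y.toLinearMapₛₗ₂' R σ (RingHom.id R) u v)
      = (σ ∘ σ ∘ u) ⬝ᵥ y.map σ *ᵥ (σ ∘ v) := by
        rw [toLinearMapₛₗ₂'_apply_eq_dotProduct, RingHom.map_dotProduct, map_comp_mulVec]
    _ = (σ ∘ v) ⬝ᵥ (y.map σ)ᵀ *ᵥ u := by
        rw [hσu, dotProduct_mulVec, dotProduct_comm, mulVec_transpose]
    _ = ε * y.toLinearMapₛₗ₂' R σ (RingHom.id R) v u := by
        rw [hy, smul_mulVec, dotProduct_smul, smul_eq_mul, toLinearMapₛₗ₂'_apply_eq_dotProduct]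

theorem toLinearMapₛₗ₂'_transpose_map_mul_mul [Fintype κ] [Fintype κ'] [DecidableEq κ]
    [DecidableEq κ'] (g : Matrix ι κ R) (y : Matrix ι ι' R) (h : Matrix ι' κ' R)
    (u : κ → R) (v : κ' → R) :
    ((g.map σ)ᵀ * y * h).toLinearMapₛₗ₂' R σ (RingHom.id R) u v =
      y.toLinearMapₛₗ₂' R σ (RingHom.id R) (g *ᵥ u) (h *ᵥ v) := by
  rw [toLinearMapₛₗ₂'_apply_eq_dotProduct, toLinearMapₛₗ₂'_apply_eq_dotProduct, map_comp_mulVec,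
    ← mulVec_mulVec, ← mulVec_mulVec, dotProduct_mulVec, vecMul_transpose]

end MatrixForms

theorem involutive_of_isQuadraticExtension {k K : Type*} [Field k] [Field K] [Algebra k K]
    [Algebra.IsQuadraticExtension k K] (ρ : K ≃ₐ[k] K) : Function.Involutive ρ := by
  have hcard : Fintype.card (K ≃ₐ[k] K) ≤ 2 :=
    Algebra.IsQuadraticExtension.finrank_eq_two k K ▸ AlgEquiv.card_le
  have horder : orderOf ρ ≤ 2 := orderOf_le_card_univ.trans hcard
  have hpos : 0 < orderOf ρ := orderOf_pos ρ
  have hdvd : orderOf ρ ∣ 2 := by interval_cases orderOf ρ <;> decide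
  have hsq : ρ * ρ = 1 := by rw [← pow_two, orderOf_dvd_iff_pow_eq_one.mp hdvd]
  exact DFunLike.congr_fun hsq

theorem stmt_2_general {K ι : Type*} [Field K] [Fintype ι] [DecidableEq ι] [Nonempty ι]
    {σ : K →+* K} (hσ : Function.Involutive σ) (hσ_ne : σ ≠ RingHom.id K) {ε : K}
    {y : Matrix ι ι K} (hy : (y.map σ)ᵀ = ε • y) {a : K} (ha : a * σ a = 1) :
    ∃ h : Matrix ι ι K, (h.map σ)ᵀ * y * h = y ∧ h.det = a := by
  obtain ⟨h, h_isometry, h_det⟩ :=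
    (isEpsilonHermitian_toLinearMapₛₗ₂' hσ hy).exists_isometry_det_eq hσ_ne ha
  refine ⟨LinearMap.toMatrix' h, ?_, by rw [LinearMap.det_toMatrix', h_det]⟩
  apply (Matrix.toLinearMapₛₗ₂' K σ (RingHom.id K)).injective
  refine LinearMap.ext₂ fun u v => ?_
  rw [toLinearMapₛₗ₂'_transpose_map_mul_mul, LinearMap.toMatrix'_mulVec,
    LinearMap.toMatrix'_mulVec, h_isometry]

/-- Let `K/k` be a quadratic extension of non-archimedean local fields of
characteristic zero with Galois involution `ρ`, let `ε ∈ {±1}`, `n ≥ 1`, and let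
`y ∈ GL_n(K)` satisfy `(ρ y)ᵀ = ε • y` (`ρ` applied entrywise). Then for every `a ∈ K^×`
with `a · ρ(a) = 1` there exists `h ∈ GL_n(K)` with `(ρ h)ᵀ · y · h = y` and `det h = a`. -/
theorem stmt_2 (p : ℕ) [Fact p.Prime]
    (k K : Type) [Field k] [Field K]
    [Algebra ℚ_[p] k] [FiniteDimensional ℚ_[p] k]
    [Algebra k K] (hquad : Module.finrank k K = 2)
    (ρ : K ≃ₐ[k] K) (hρ : ρ ≠ 1)
    (ε : K) (hε : ε = 1 ∨ ε = -1)
    (n : ℕ) (hn : 1 ≤ n)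
    (y : Matrix (Fin n) (Fin n) K) (hy : IsUnit y)
    (hherm : (y.map ⇑ρ)ᵀ = ε • y)
    (a : K) (ha : a * ρ a = 1) :
    ∃ h : Matrix (Fin n) (Fin n) K, (h.map ⇑ρ)ᵀ * y * h = y ∧ h.det = a := by
  have : Algebra.IsQuadraticExtension k K := ⟨hquad⟩
  have : Nonempty (Fin n) := Fin.pos_iff_nonempty.mp hn
  have hρ_inv : Function.Involutive ρ := involutive_of_isQuadraticExtension ρ
  have hρ_ne : (ρ : K →+* K) ≠ RingHom.id K :=
    fun h => hρ (AlgEquiv.ext fun x => RingHom.congr_fun h x)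
  exact stmt_2_general (σ := (ρ : K →+* K)) hρ_inv hρ_ne hherm ha
end

section
/- For every x ∈ X^j there exists z ∈ GL_n(E') with x = z·σ(z)^{-1}, and for any such z the matrix y = transpose(τ(z))·j·z lies in Y_n(F). Moreover, the assignment sending the orbit G^j(E)·x to the orbit y ⋆ GL_n(F') is a well-defined bijection from the set of G^j(E)-orbits in X^j onto the set of GL_n(F')-orbits in (j ⋆ GL_n(E')) ∩ Y_n(F). -/
open Matrix

namespace GaloisPair

variable {E' : Type} [Field E']

/-- `g ∈ G^j(E)`: the isometry group of the `ε`-hermitian form `j`,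
`G^j(E) = {g ∈ GL_n(E') : τ(g)ᵀ j g = j}` (`τ` applied entrywise). -/
def Gj {n : ℕ} (τ : E' → E') (j g : Matrix (Fin n) (Fin n) E') : Prop :=
  IsUnit g ∧ (g.map τ)ᵀ * j * g = j

/-- `x ∈ X^j = {x ∈ G^j(E) : x·σ(x) = 1}`. -/
def Xj {n : ℕ} (σ τ : E' → E') (j x : Matrix (Fin n) (Fin n) E') : Prop :=
  Gj τ j x ∧ x * x.map σ = 1

/-- `x'` lies in the `G^j(E)`-orbit of `x` for twisted conjugation `g·x = g x σ(g)⁻¹`. -/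
def orbGj {n : ℕ} (σ τ : E' → E') (j x x' : Matrix (Fin n) (Fin n) E') : Prop :=
  ∃ g, Gj τ j g ∧ x' = g * x * (g.map σ)⁻¹

/-- `y ∈ Y_n(F)`: invertible, entries fixed by `σ` (i.e. in `F'`), and `τ(y)ᵀ = ε • y`. -/
def inYnF {n : ℕ} (σ τ : E' → E') (ε : E') (y : Matrix (Fin n) (Fin n) E') : Prop :=
  IsUnit y ∧ (∀ a b, σ (y a b) = y a b) ∧ (y.map τ)ᵀ = ε • y

/-- `y'` lies in the `GL_n(F')`-orbit of `y` for the action `y ⋆ g = τ(g)ᵀ y g`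
(elements of `GL_n(F')` are the invertible matrices with `σ`-fixed entries). -/
def orbY {n : ℕ} (σ τ : E' → E') (y y' : Matrix (Fin n) (Fin n) E') : Prop :=
  ∃ g, (IsUnit g ∧ ∀ a b, σ (g a b) = g a b) ∧ y' = (g.map τ)ᵀ * y * g

end GaloisPair

open GaloisPair

/-! Write `j ⋆ z = τ(z)ᵀ j z`, a right action of `GL_n(E')` commuting with `σ`. If `x σ(z) = z`,
then `j ⋆ z = (j ⋆ x) ⋆ σ(z)` while `σ(j ⋆ z) = j ⋆ σ(z)`, so `x` fixes `j` exactly when `j ⋆ z`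
is `σ`-invariant. If moreover `x' σ(z') = z'` and `z' = g z k`, then `g` carries `x` to `x'`
exactly when `k` is `σ`-invariant, and `g` fixes `j` exactly when `k` carries `j ⋆ z` to `j ⋆ z'`.
What remains is the existence of `z`, which is Hilbert 90 for `GL_n`: the columns of `z` form a
basis of vectors fixed by the semilinear involution `v ↦ x σ(v)`, and these span because any
nontrivial semilinear involution descends the vector space. -/

namespace GaloisPair

section Descent

theorem span_fixedPoints_eq_top_of_involutive {K V : Type*} [DivisionRing K] [AddCommGroup V]
    [Module K V] {σ : K →+* K} (hσ : σ ≠ RingHom.id K) {T : V →ₛₗ[σ] V}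
    (hT : Function.Involutive T) :
    Submodule.span K (Function.fixedPoints T) = ⊤ := by
  obtain ⟨e, he⟩ : ∃ e, σ e ≠ e := by
    by_contra! h
    exact hσ (RingHom.ext h)
  have add_mem (w : V) : w + T w ∈ Submodule.span K (Function.fixedPoints T) :=
    Submodule.subset_span <| show T (w + T w) = w + T w by rw [map_add, hT w, add_comm]
  refine Submodule.eq_top_iff'.2 fun v ↦ ?_
  have combination : (e • v + T (e • v)) - σ e • (v + T v) = (e - σ e) • v := by
    rw [map_smulₛₗ, smul_add, sub_smul, add_sub_add_right_eq_sub]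
  rw [← Submodule.smul_mem_iff _ (sub_ne_zero.2 he.symm), ← combination]
  exact sub_mem (add_mem _) (Submodule.smul_mem _ _ (add_mem _))

theorem exists_isUnit_forall_col_mem_of_span_eq_top {K m : Type*} [Field K] [Fintype m]
    [DecidableEq m] {s : Set (m → K)} (hs : Submodule.span K s = ⊤) :
    ∃ z : Matrix m m K, IsUnit z ∧ ∀ i, z.col i ∈ s := by
  let b := Module.Basis.ofSpan hs.ge
  let b' := b.reindex (b.indexEquiv (Pi.basisFun K m))
  refine ⟨(Matrix.of b')ᵀ, linearIndependent_cols_iff_isUnit.1 b'.linearIndependent, fun i ↦ ?_⟩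
  exact Module.Basis.ofSpan_subset hs.ge ⟨_, (b.reindex_apply _ i).symm⟩

variable {R m : Type*} [CommSemiring R] [Fintype m]

/-- The semilinear map `v ↦ x σ(v)` on column vectors, whose fixed vectors are the columns `v` with
`x σ(v) = v`. -/
def twistedMulVec (σ : R →+* R) (x : Matrix m m R) : (m → R) →ₛₗ[σ] (m → R) where
  toFun v := x *ᵥ (σ ∘ v)
  map_add' v w := by
    rw [← Matrix.mulVec_add]
    exact congrArg _ (funext fun _ ↦ map_add σ _ _)
  map_smul' c v := by
    rw [← Matrix.mulVec_smul]
    exact congrArg _ (funext fun _ ↦ map_mul σ _ _)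

theorem twistedMulVec_involutive [DecidableEq m] {σ : R →+* R} (hσ : Function.Involutive σ)
    {x : Matrix m m R} (hx : x * x.map σ = 1) : Function.Involutive (twistedMulVec σ x) := fun v ↦
  calc x *ᵥ (σ ∘ (x *ᵥ (σ ∘ v)))
    _ = x *ᵥ (x.map σ *ᵥ (σ ∘ σ ∘ v)) := by
      congr 1
      exact funext (σ.map_mulVec x (σ ∘ v))
    _ = v := by
      rw [Matrix.mulVec_mulVec, hx, Matrix.one_mulVec, ← Function.comp_assoc, hσ.comp_self,
        Function.id_comp]

theorem exists_isUnit_mul_map_eq_self {K m : Type*} [Field K] [Fintype m] [DecidableEq m]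
    {σ : K →+* K} (hσ : Function.Involutive σ) (hσ_ne : σ ≠ RingHom.id K) {x : Matrix m m K}
    (hx : x * x.map σ = 1) : ∃ z, IsUnit z ∧ x * z.map σ = z := by
  obtain ⟨z, hz, hz_fixed⟩ := exists_isUnit_forall_col_mem_of_span_eq_top
    (span_fixedPoints_eq_top_of_involutive hσ_ne (twistedMulVec_involutive hσ hx))
  exact ⟨z, hz, Matrix.ext_col hz_fixed⟩

end Descent

section TwistedConjugation

variable {R m : Type*} [Semiring R] [Fintype m] [DecidableEq m] {σ : R →+* R}
  {x x' z g k : Matrix m m R}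

theorem isUnit_map (σ : R →+* R) (hz : IsUnit z) : IsUnit (z.map σ) :=
  hz.map σ.mapMatrix

theorem mul_map_eq_one_of_mul_map_eq_self (hσ : Function.Involutive σ) (hz : IsUnit z)
    (hxz : x * z.map σ = z) : x * x.map σ = 1 := by
  have map_map : (z.map σ).map σ = z := Matrix.ext fun a b ↦ hσ (z a b)
  have map_hxz : x.map σ * z = z.map σ := by
    simpa only [Matrix.map_mul, map_map] using congrArg (·.map σ) hxz
  rw [← hz.mul_left_inj, Matrix.mul_assoc, map_hxz, hxz, Matrix.one_mul]

theorem mul_map_eq_mul_iff_map_eq_self (hg : IsUnit g) (hz : IsUnit z) (hk : IsUnit k)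
    (hxz : x * z.map σ = z) (hxz' : x' * (g * z * k).map σ = g * z * k) :
    x' * g.map σ = g * x ↔ k.map σ = k :=
  calc x' * g.map σ = g * x
    _ ↔ x' * g.map σ * (z * k).map σ = g * x * (z * k).map σ :=
      (isUnit_map σ (hz.mul hk)).mul_left_inj.symm
    _ ↔ g * z * k = g * z * k.map σ := by
      have left : x' * g.map σ * (z * k).map σ = g * z * k := by
        rw [Matrix.mul_assoc, ← Matrix.map_mul, ← Matrix.mul_assoc g, hxz']
      have right : g * x * (z * k).map σ = g * z * k.map σ := by
        rw [Matrix.map_mul, ← Matrix.mul_assoc, Matrix.mul_assoc g, hxz]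
      rw [left, right]
    _ ↔ k.map σ = k := by rw [(hg.mul hz).mul_right_inj, eq_comm]

end TwistedConjugation

section Pullback

variable {R m : Type*} [CommSemiring R] [Fintype m] {σ τ : R →+* R} {j x x' z z' g k : Matrix m m R}

/-- The right action `j ⋆ z = τ(z)ᵀ j z`: the Gram matrix of the `τ`-sesquilinear form `j`
pulled back along `z`. -/
def pullback (τ : R →+* R) (j z : Matrix m m R) : Matrix m m R :=
  (z.map τ)ᵀ * j * z

theorem pullback_mul (j z w : Matrix m m R) :
    pullback τ j (z * w) = pullback τ (pullback τ j z) w := by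
  simp only [pullback, Matrix.map_mul, Matrix.transpose_mul, Matrix.mul_assoc]

theorem map_pullback (hcomm : Function.Commute σ τ) (j z : Matrix m m R) :
    (pullback τ j z).map σ = pullback τ (j.map σ) (z.map σ) := by
  have map_comm : (z.map τ).map σ = (z.map σ).map τ := Matrix.ext fun a b ↦ hcomm (z a b)
  simp only [pullback, Matrix.map_mul, Matrix.transpose_map, map_comm]

theorem transpose_map_pullback (hτ : Function.Involutive τ) (j z : Matrix m m R) :
    ((pullback τ j z).map τ)ᵀ = pullback τ (j.map τ)ᵀ z := by
  have map_map : (z.map τ).map τ = z := Matrix.ext fun a b ↦ hτ (z a b)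
  simp only [pullback, Matrix.map_mul, Matrix.transpose_mul, Matrix.transpose_map,
    Matrix.transpose_transpose, map_map, Matrix.mul_assoc]

theorem pullback_smul (c : R) (j z : Matrix m m R) :
    pullback τ (c • j) z = c • pullback τ j z := by
  simp only [pullback, Matrix.mul_smul, Matrix.smul_mul]

variable [DecidableEq m]

theorem isUnit_transpose_map (τ : R →+* R) (hz : IsUnit z) : IsUnit (z.map τ)ᵀ :=
  (Matrix.isUnit_transpose _).2 (isUnit_map τ hz)

theorem isUnit_pullback (hj : IsUnit j) (hz : IsUnit z) : IsUnit (pullback τ j z) :=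
  ((isUnit_transpose_map τ hz).mul hj).mul hz

theorem pullback_left_inj {j' : Matrix m m R} (hz : IsUnit z) :
    pullback τ j z = pullback τ j' z ↔ j = j' := by
  rw [pullback, pullback, hz.mul_left_inj, (isUnit_transpose_map τ hz).mul_right_inj]

theorem pullback_eq_self_iff (hcomm : Function.Commute σ τ) (hj : j.map σ = j) (hz : IsUnit z)
    (hxz : x * z.map σ = z) :
    pullback τ j x = j ↔ (pullback τ j z).map σ = pullback τ j z := by
  have factor : pullback τ j z = pullback τ (pullback τ j x) (z.map σ) := by
    rw [← pullback_mul, hxz]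
  rw [map_pullback hcomm, hj, factor, pullback_left_inj (isUnit_map σ hz), eq_comm]

theorem pullback_eq_self_iff_pullback_mul_mul (hz : IsUnit z) (hk : IsUnit k) :
    pullback τ j g = j ↔ pullback τ j (g * z * k) = pullback τ (pullback τ j z) k := by
  rw [pullback_mul, pullback_mul, pullback_left_inj hk, pullback_left_inj hz]

theorem exists_twistedConj_iff_exists_pullback (hz : IsUnit z) (hz' : IsUnit z')
    (hxz : x * z.map σ = z) (hxz' : x' * z'.map σ = z') :
    (∃ g, (IsUnit g ∧ pullback τ j g = j) ∧ x' * g.map σ = g * x) ↔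
      ∃ k, (IsUnit k ∧ k.map σ = k) ∧ pullback τ j z' = pullback τ (pullback τ j z) k := by
  have isometry_twistedConj_iff {g k : Matrix m m R} (hg : IsUnit g) (hk : IsUnit k)
      (factor : z' = g * z * k) :
      pullback τ j g = j ∧ x' * g.map σ = g * x ↔
        pullback τ j z' = pullback τ (pullback τ j z) k ∧ k.map σ = k := by
    subst factor
    rw [pullback_eq_self_iff_pullback_mul_mul hz hk,
      mul_map_eq_mul_iff_map_eq_self hg hz hk hxz hxz']
  lift z to (Matrix m m R)ˣ using hz
  lift z' to (Matrix m m R)ˣ using hz'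
  constructor
  · rintro ⟨g, ⟨hg, hgj⟩, hgx⟩
    lift g to (Matrix m m R)ˣ using hg
    let k := (g * z)⁻¹ * z'
    have factor : z' = g * z * k := by simp only [k, mul_inv_cancel_left]
    have hk := (isometry_twistedConj_iff g.isUnit k.isUnit (congrArg Units.val factor)).1 ⟨hgj, hgx⟩
    exact ⟨k, ⟨k.isUnit, hk.2⟩, hk.1⟩
  · rintro ⟨k, ⟨hk, hkσ⟩, hky⟩
    lift k to (Matrix m m R)ˣ using hk
    let g := z' * (z * k)⁻¹
    have factor : z' = g * z * k := by rw [mul_assoc, inv_mul_cancel_right]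
    have hg := (isometry_twistedConj_iff g.isUnit k.isUnit (congrArg Units.val factor)).2 ⟨hky, hkσ⟩
    exact ⟨g, ⟨g.isUnit, hg.1⟩, hg.2⟩

end Pullback

theorem eq_mul_nonsing_inv_iff_mul_eq {R m : Type*} [CommRing R] [Fintype m] [DecidableEq m]
    {x w z : Matrix m m R} (hz : IsUnit z) : x = w * z⁻¹ ↔ x * z = w := by
  lift z to (Matrix m m R)ˣ using hz
  rw [← Matrix.coe_units_inv, Units.eq_mul_inv_iff_mul_eq]

section Orbits

variable {E' : Type} [Field E'] {n : ℕ} {σ τ : E' →+* E'} {ε : E'}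
  {j x x' z z' : Matrix (Fin n) (Fin n) E'}

theorem xj_iff_inYnF_pullback (hσ : Function.Involutive σ) (hτ : Function.Involutive τ)
    (hcomm : Function.Commute σ τ) (hj : inYnF σ τ ε j) (hz : IsUnit z)
    (hx : x = z * (z.map σ)⁻¹) : Xj σ τ j x ↔ inYnF σ τ ε (pullback τ j z) := by
  obtain ⟨hj_unit, hjσ, hjτ⟩ := hj
  have hxz := (eq_mul_nonsing_inv_iff_mul_eq (isUnit_map σ hz)).1 hx
  have isUnit_x : IsUnit x :=
    hx ▸ hz.mul (Matrix.isUnit_nonsing_inv_iff.2 (isUnit_map σ hz))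
  have hermitian : ((pullback τ j z).map τ)ᵀ = ε • pullback τ j z := by
    rw [transpose_map_pullback hτ, hjτ, pullback_smul]
  have isometry_iff := pullback_eq_self_iff hcomm (Matrix.ext hjσ) hz hxz
  constructor
  · rintro ⟨⟨-, hxj⟩, -⟩
    exact ⟨isUnit_pullback hj_unit hz, Matrix.ext_iff.2 (isometry_iff.1 hxj), hermitian⟩
  · rintro ⟨-, hyσ, -⟩
    exact ⟨⟨isUnit_x, isometry_iff.2 (Matrix.ext hyσ)⟩,
      mul_map_eq_one_of_mul_map_eq_self hσ hz hxz⟩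

theorem orbGj_iff_orbY_pullback (hz : IsUnit z) (hz' : IsUnit z') (hx : x = z * (z.map σ)⁻¹)
    (hx' : x' = z' * (z'.map σ)⁻¹) :
    orbGj σ τ j x x' ↔ orbY σ τ (pullback τ j z) (pullback τ j z') := by
  rw [eq_mul_nonsing_inv_iff_mul_eq (isUnit_map σ hz)] at hx
  rw [eq_mul_nonsing_inv_iff_mul_eq (isUnit_map σ hz')] at hx'
  calc orbGj σ τ j x x'
    _ ↔ ∃ g, (IsUnit g ∧ pullback τ j g = j) ∧ x' * g.map σ = g * x :=
      exists_congr fun _ ↦ and_congr_right fun hg ↦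
        eq_mul_nonsing_inv_iff_mul_eq (isUnit_map σ hg.1)
    _ ↔ ∃ k, (IsUnit k ∧ k.map σ = k) ∧ pullback τ j z' = pullback τ (pullback τ j z) k :=
      exists_twistedConj_iff_exists_pullback hz hz' hx hx'
    _ ↔ orbY σ τ (pullback τ j z) (pullback τ j z') :=
      exists_congr fun _ ↦ and_congr_left' (and_congr_right' Matrix.ext_iff.symm)

end Orbits

end GaloisPair

theorem stmt_3_general {E' : Type} [Field E'] {σ τ : E' →+* E'}
    (hσ : Function.Involutive σ) (hτ : Function.Involutive τ) (hcomm : Function.Commute σ τ)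
    (hσ_ne : σ ≠ RingHom.id E') {ε : E'} {n : ℕ} {j : Matrix (Fin n) (Fin n) E'}
    (hj : inYnF σ τ ε j) :
    (∀ x, Xj σ τ j x → ∃ z, IsUnit z ∧ x = z * (z.map σ)⁻¹) ∧
    (∀ x z, Xj σ τ j x → IsUnit z → x = z * (z.map σ)⁻¹ → inYnF σ τ ε ((z.map τ)ᵀ * j * z)) ∧
    (∀ x x' z z', Xj σ τ j x → Xj σ τ j x' → IsUnit z → IsUnit z' →
      x = z * (z.map σ)⁻¹ → x' = z' * (z'.map σ)⁻¹ →
      (orbGj σ τ j x x' ↔ orbY σ τ ((z.map τ)ᵀ * j * z) ((z'.map τ)ᵀ * j * z'))) ∧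
    (∀ y, (∃ g, IsUnit g ∧ y = (g.map τ)ᵀ * j * g) → inYnF σ τ ε y →
      ∃ z, IsUnit z ∧ y = (z.map τ)ᵀ * j * z ∧ Xj σ τ j (z * (z.map σ)⁻¹)) := by
  refine ⟨fun x ⟨_, hx⟩ ↦ ?split, fun x z hx hz hxz ↦ ?form,
    fun x x' z z' _ _ hz hz' hxz hxz' ↦ ?orbits, ?surjective⟩
  case split =>
    obtain ⟨z, hz, hxz⟩ := exists_isUnit_mul_map_eq_self hσ hσ_ne hx
    exact ⟨z, hz, (eq_mul_nonsing_inv_iff_mul_eq (isUnit_map σ hz)).2 hxz⟩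
  case form => exact (xj_iff_inYnF_pullback hσ hτ hcomm hj hz hxz).1 hx
  case orbits => exact orbGj_iff_orbY_pullback hz hz' hxz hxz'
  case surjective =>
    rintro _ ⟨z, hz, rfl⟩ hy
    exact ⟨z, hz, rfl, (xj_iff_inYnF_pullback hσ hτ hcomm hj hz rfl).2 hy⟩

/-- For every `x ∈ X^j` there exists `z ∈ GL_n(E')` with `x = z·σ(z)⁻¹`,
and for any such `z` the matrix `y = τ(z)ᵀ j z` lies in `Y_n(F)`.  Moreover, the assignment
sending the orbit `G^j(E)·x` to the orbit `y ⋆ GL_n(F')` is a well-defined bijection from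
the set of `G^j(E)`-orbits in `X^j` onto the set of `GL_n(F')`-orbits in
`(j ⋆ GL_n(E')) ∩ Y_n(F)`. -/
theorem stmt_3 (p : ℕ) [Fact p.Prime]
    (E' : Type) [Field E'] [Algebra ℚ_[p] E'] [FiniteDimensional ℚ_[p] E']
    (σ τ : E' ≃ₐ[ℚ_[p]] E')
    (hσ2 : σ * σ = 1) (hτ2 : τ * τ = 1) (hcomm : σ * τ = τ * σ)
    (hσ1 : σ ≠ 1)
    (hcase : (τ ≠ 1 ∧ σ ≠ τ) ∨ τ = 1)
    (ε : E') (hε : ε = 1 ∨ ε = -1)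
    (n : ℕ) (hn : 1 ≤ n)
    (hsymp : τ = 1 → ε = -1 → Even n)
    (j : Matrix (Fin n) (Fin n) E')
    (hj : inYnF ⇑σ ⇑τ ε j) :
    -- every x ∈ X^j is of the form z·σ(z)⁻¹
    (∀ x, Xj ⇑σ ⇑τ j x → ∃ z, IsUnit z ∧ x = z * (z.map ⇑σ)⁻¹) ∧
    -- for any such z, the matrix y = τ(z)ᵀ j z lies in Y_n(F)
    (∀ x z, Xj ⇑σ ⇑τ j x → IsUnit z → x = z * (z.map ⇑σ)⁻¹ →
      inYnF ⇑σ ⇑τ ε ((z.map ⇑τ)ᵀ * j * z)) ∧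
    -- the assignment is well defined and injective on orbits
    (∀ x x' z z', Xj ⇑σ ⇑τ j x → Xj ⇑σ ⇑τ j x' → IsUnit z → IsUnit z' →
      x = z * (z.map ⇑σ)⁻¹ → x' = z' * (z'.map ⇑σ)⁻¹ →
      (orbGj ⇑σ ⇑τ j x x' ↔ orbY ⇑σ ⇑τ ((z.map ⇑τ)ᵀ * j * z) ((z'.map ⇑τ)ᵀ * j * z'))) ∧
    -- the assignment is surjective onto (j ⋆ GL_n(E')) ∩ Y_n(F)
    (∀ y, (∃ g, IsUnit g ∧ y = (g.map ⇑τ)ᵀ * j * g) → inYnF ⇑σ ⇑τ ε y →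
      ∃ z, IsUnit z ∧ y = (z.map ⇑τ)ᵀ * j * z ∧ Xj ⇑σ ⇑τ j (z * (z.map ⇑σ)⁻¹)) :=
  stmt_3_general (σ := (σ : E' →+* E')) (τ := (τ : E' →+* E')) (DFunLike.congr_fun hσ2)
    (DFunLike.congr_fun hτ2) (DFunLike.congr_fun hcomm)
    (fun h ↦ hσ1 (AlgEquiv.ext (RingHom.congr_fun h))) hj
end

section
/- In the symplectic case (F' = F, τ = id, ε = -1, n even, so j ∈ GL_n(F) is an invertible alternating matrix and G^j(E) = Sp(j, E) = {g ∈ GL_n(E) : transpose(g)·j·g = j}), the symmetric space X^j is a single G^j(E)-orbit: X^j = G^j(E)·I_n. -/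
open Matrix

/-!
By Hilbert's Theorem 90 for `GL_n`, the relation `x σ(x) = 1` gives an invertible `g` with
`x σ(g) = g`. Since `x` preserves `j`, the matrix `gᵀ j g` is again alternating and fixed by `σ`, so
`gᵀ j g` and `j` are alternating matrices of the same rank over the fixed field of `σ`. Alternating
forms are classified by dimension and rank: split off hyperbolic planes until the form vanishes.
Hence `hᵀ (gᵀ j g) h = j` for some invertible `h` over the fixed field, and `g h` is an isometry of
`j` with `x σ(g h) = x σ(g) h = g h`.
-/

open LinearMap (BilinForm)
open LinearMap.BilinForm (congr congr_apply congr_symm congr_trans)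

section AlternatingForms

section CommRing

variable {R V W W' : Type*} [CommRing R] [AddCommGroup V] [Module R V]
  [AddCommGroup W] [Module R W] [AddCommGroup W'] [Module R W']

/-- The orthogonal sum of the hyperbolic plane `R × R`, with form `a * b' - b * a'`, and the
bilinear space `(W, C)`. -/
def hyperbolicSum (C : BilinForm R W) : BilinForm R ((R × R) × W) :=
  LinearMap.mk₂ R (fun v w ↦ v.1.1 * w.1.2 - v.1.2 * w.1.1 + C v.2 w.2)
    (fun _ _ _ ↦ by simp only [Prod.fst_add, Prod.snd_add, map_add, LinearMap.add_apply]; ring)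
    (fun _ _ _ ↦ by
      simp only [Prod.smul_fst, Prod.smul_snd, map_smul, LinearMap.smul_apply, smul_eq_mul]; ring)
    (fun _ _ _ ↦ by simp only [Prod.fst_add, Prod.snd_add, map_add]; ring)
    (fun _ _ _ ↦ by simp only [Prod.smul_fst, Prod.smul_snd, map_smul, smul_eq_mul]; ring)

theorem hyperbolicSum_apply (C : BilinForm R W) (v w : (R × R) × W) :
    hyperbolicSum C v w = v.1.1 * w.1.2 - v.1.2 * w.1.1 + C v.2 w.2 :=
  rfl

theorem congr_hyperbolicSum (φ : W ≃ₗ[R] W') (C : BilinForm R W) :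
    congr ((LinearEquiv.refl R (R × R)).prodCongr φ) (hyperbolicSum C) =
      hyperbolicSum (congr φ C) :=
  rfl

theorem ker_hyperbolicSum (C : BilinForm R W) :
    LinearMap.ker (hyperbolicSum C) =
      (LinearMap.ker C).map (LinearMap.inr R (R × R) W) := by
  ext ⟨⟨a, b⟩, y⟩
  simp only [Submodule.mem_map, LinearMap.mem_ker, LinearMap.inr_apply, Prod.mk.injEq]
  constructor
  · intro h
    have ha : a = 0 := by simpa [hyperbolicSum_apply] using LinearMap.congr_fun h ((0, 1), 0)
    have hb : b = 0 := by simpa [hyperbolicSum_apply] using LinearMap.congr_fun h ((1, 0), 0)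
    refine ⟨y, LinearMap.ext fun z ↦ ?_, by rw [ha, hb]; rfl, rfl⟩
    simpa [hyperbolicSum_apply] using LinearMap.congr_fun h (0, z)
  · rintro ⟨y, hy, hab, rfl⟩
    obtain ⟨rfl, rfl⟩ := Prod.mk.inj hab
    ext <;> simp [hyperbolicSum_apply, hy]

theorem finrank_ker_hyperbolicSum (C : BilinForm R W) :
    Module.finrank R (LinearMap.ker (hyperbolicSum C)) = Module.finrank R (LinearMap.ker C) := by
  rw [ker_hyperbolicSum]
  exact (Submodule.equivMapOfInjective _ LinearMap.inr_injective _).finrank_eq.symm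

theorem finrank_ker_congr (e : W ≃ₗ[R] W') (B : BilinForm R W) :
    Module.finrank R (LinearMap.ker (congr e B)) = Module.finrank R (LinearMap.ker B) := by
  have hker : LinearMap.ker (congr e B) = (LinearMap.ker B).map (e : W →ₗ[R] W') := by
    ext v
    rw [Submodule.mem_map_equiv, LinearMap.mem_ker, LinearMap.mem_ker]
    refine ⟨fun h ↦ LinearMap.ext fun w ↦ ?_, fun h ↦ LinearMap.ext fun w ↦ ?_⟩
    · simpa using LinearMap.congr_fun h (e w)
    · simp [h]
  rw [hker, LinearEquiv.finrank_map_eq]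

theorem exists_congr_eq_hyperbolicSum {B : BilinForm R V} (hB : B.IsAlt) {u w : V}
    (huw : B u w = 1) :
    ∃ (W : Submodule R V) (e : V ≃ₗ[R] (R × R) × W), congr e B = hyperbolicSum (B.restrict W) := by
  have hwu : B w u = -1 := by rw [← hB.neg_eq, huw]
  let W := LinearMap.ker (B u) ⊓ LinearMap.ker (B w)
  have hW (y : W) : B u y = 0 ∧ B w y = 0 ∧ B y u = 0 ∧ B y w = 0 :=
    ⟨y.2.1, y.2.2, hB.isRefl _ _ y.2.1, hB.isRefl _ _ y.2.2⟩
  let proj (v : V) : W := ⟨v + B w v • u - B u v • w, by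
    simp [W, hB.self_eq_zero, huw, hwu]⟩
  let e : ((R × R) × W) ≃ₗ[R] V :=
    { toFun := fun v ↦ v.1.1 • u + v.1.2 • w + v.2
      map_add' := fun v v' ↦ by
        simp only [Prod.fst_add, Prod.snd_add, Submodule.coe_add]; module
      map_smul' := fun c v ↦ by
        simp only [Prod.smul_fst, Prod.smul_snd, Submodule.coe_smul, smul_eq_mul,
          RingHom.id_apply]
        module
      invFun := fun v ↦ ((-B w v, B u v), proj v)
      left_inv := fun ⟨⟨a, b⟩, y⟩ ↦ by
        obtain ⟨huy, hwy, -, -⟩ := hW y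
        have hu : B u (a • u + b • w + y) = b := by simp [huw, huy, hB.self_eq_zero]
        have hw : B w (a • u + b • w + y) = -a := by simp [hwu, hwy, hB.self_eq_zero]
        refine Prod.ext (Prod.ext ?_ hu) (Subtype.ext ?_)
        · simp only [hw, neg_neg]
        · simp only [proj, hu, hw]
          module
      right_inv := fun v ↦ by simp only [proj]; module }
  refine ⟨W, e.symm, LinearMap.ext₂ fun ⟨⟨a, b⟩, y⟩ ⟨⟨a', b'⟩, y'⟩ ↦ ?_⟩
  obtain ⟨-, -, hyu, hyw⟩ := hW y
  obtain ⟨huy', hwy', -, -⟩ := hW y'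
  simp only [e, congr_apply, hyperbolicSum_apply, LinearEquiv.symm_mk, LinearEquiv.coe_mk,
    LinearMap.coe_mk, AddHom.coe_mk, map_add, map_smul, LinearMap.add_apply, LinearMap.smul_apply,
    smul_eq_mul, hB.self_eq_zero, huw, hwu, hyu, hyw, huy', hwy', BilinForm.restrict_apply,
    LinearMap.domRestrict_apply]
  ring

end CommRing

section Field

theorem eq_zero_iff_finrank_ker_eq {K V V' : Type*} [DivisionRing K] [AddCommGroup V]
    [Module K V] [FiniteDimensional K V] [AddCommGroup V'] [Module K V'] {f : V →ₗ[K] V'} :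
    f = 0 ↔ Module.finrank K (LinearMap.ker f) = Module.finrank K V := by
  rw [← LinearMap.ker_eq_top]
  exact ⟨fun h ↦ by rw [h, finrank_top], Submodule.eq_top_of_finrank_eq⟩

variable {K V V' : Type*} [Field K] [AddCommGroup V] [Module K V]
  [AddCommGroup V'] [Module K V']

theorem exists_apply_eq_one_of_ne_zero {B : BilinForm K V} (hB : B ≠ 0) : ∃ u w, B u w = 1 := by
  obtain ⟨u, w, huw⟩ : ∃ u w, B u w ≠ 0 := by
    by_contra! h
    exact hB (LinearMap.ext₂ h)
  exact ⟨u, (B u w)⁻¹ • w, by simp [huw]⟩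

theorem exists_congr_eq_of_isAlt [FiniteDimensional K V] [FiniteDimensional K V']
    {B : BilinForm K V} {B' : BilinForm K V'} (hB : B.IsAlt) (hB' : B'.IsAlt)
    (hdim : Module.finrank K V = Module.finrank K V')
    (hker : Module.finrank K (LinearMap.ker B) = Module.finrank K (LinearMap.ker B')) :
    ∃ e : V ≃ₗ[K] V', congr e B = B' := by
  induction hd : Module.finrank K V using Nat.strong_induction_on generalizing V V' with
  | _ d ih =>
  subst hd
  have hzero : B = 0 ↔ B' = 0 := by
    rw [eq_zero_iff_finrank_ker_eq, eq_zero_iff_finrank_ker_eq, hdim, hker]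
  by_cases hB0 : B = 0
  · refine ⟨LinearEquiv.ofFinrankEq V V' hdim, ?_⟩
    rw [hB0, hzero.mp hB0, map_zero]
  · obtain ⟨u, w, huw⟩ := exists_apply_eq_one_of_ne_zero hB0
    obtain ⟨u', w', huw'⟩ := exists_apply_eq_one_of_ne_zero (hzero.not.mp hB0)
    obtain ⟨W, e, he⟩ := exists_congr_eq_hyperbolicSum hB huw
    obtain ⟨W', e', he'⟩ := exists_congr_eq_hyperbolicSum hB' huw'
    have hW : Module.finrank K V = 2 + Module.finrank K W := by simp [e.finrank_eq]
    have hW' : Module.finrank K V' = 2 + Module.finrank K W' := by simp [e'.finrank_eq]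
    have hkerW : Module.finrank K (LinearMap.ker (B.restrict W)) =
        Module.finrank K (LinearMap.ker (B'.restrict W')) := by
      rw [← finrank_ker_hyperbolicSum (B.restrict W), ← he, finrank_ker_congr, hker,
        ← finrank_ker_congr e' B', he', finrank_ker_hyperbolicSum]
    obtain ⟨φ, hφ⟩ := ih (Module.finrank K W) (by omega) (B := B.restrict W)
      (B' := B'.restrict W') (fun y ↦ hB y) (fun y ↦ hB' y) (by omega) hkerW rfl
    refine ⟨e.trans (((LinearEquiv.refl K _).prodCongr φ).trans e'.symm), ?_⟩
    rw [← congr_trans, ← congr_trans, LinearEquiv.trans_apply, LinearEquiv.trans_apply, he,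
      congr_hyperbolicSum, hφ, ← he', ← congr_symm, LinearEquiv.symm_apply_apply]

end Field

end AlternatingForms

section AlternatingMatrices

theorem rank_map_ringHom {n K L : Type*} [Fintype n] [Field K] [Field L] (f : K →+* L)
    (A : Matrix n n K) : (A.map f).rank = A.rank := by
  classical
  obtain ⟨T, T', D, hA⟩ := Pivot.exists_list_transvec_mul_diagonal_mul_list_transvec A
  have hT (S : List (TransvectionStruct n K)) :
      IsUnit (S.map TransvectionStruct.toMatrix).prod.det := by
    rw [TransvectionStruct.det_toMatrix_prod]; exact isUnit_one
  have hfT (S : List (TransvectionStruct n K)) :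
      IsUnit ((S.map TransvectionStruct.toMatrix).prod.map f).det := by
    rw [← RingHom.mapMatrix_apply, ← RingHom.map_det]; exact (hT S).map f
  rw [hA, Matrix.map_mul, Matrix.map_mul, diagonal_map (map_zero f),
    rank_mul_eq_left_of_isUnit_det _ _ (hfT T'), rank_mul_eq_right_of_isUnit_det _ _ (hfT T),
    rank_mul_eq_left_of_isUnit_det _ _ (hT T'), rank_mul_eq_right_of_isUnit_det _ _ (hT T),
    rank_diagonal, rank_diagonal]
  simp only [map_eq_zero, ne_eq]

theorem isAlt_toBilin'_of_transpose_eq_neg {n K : Type*} [Fintype n] [DecidableEq n] [Field K]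
    [NeZero (2 : K)] {A : Matrix n n K} (hA : Aᵀ = -A) : A.toBilin'.IsAlt := fun v ↦ by
  have hneg : v ⬝ᵥ A *ᵥ v = -(v ⬝ᵥ A *ᵥ v) :=
    calc v ⬝ᵥ A *ᵥ v = v ⬝ᵥ Aᵀ *ᵥ v := by
          rw [dotProduct_mulVec, mulVec_transpose, dotProduct_comm]
      _ = -(v ⬝ᵥ A *ᵥ v) := by rw [hA, neg_mulVec, dotProduct_neg]
  rw [toBilin'_apply']
  have htwo : 2 * (v ⬝ᵥ A *ᵥ v) = 0 := by linear_combination hneg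
  exact (mul_eq_zero.1 htwo).resolve_left two_ne_zero

theorem isAlt_toBilin'_of_map {n R S : Type*} [Fintype n] [DecidableEq n] [CommRing R]
    [CommRing S] {f : R →+* S} (hf : Function.Injective f) {A : Matrix n n R}
    (hA : (A.map f).toBilin'.IsAlt) : A.toBilin'.IsAlt := fun v ↦ hf <| by
  have hfv : (f ∘ v) ⬝ᵥ A.map f *ᵥ (f ∘ v) = 0 := by simpa only [toBilin'_apply'] using hA (f ∘ v)
  rw [toBilin'_apply', RingHom.map_dotProduct, map_zero, ← hfv]
  congr 1
  exact funext (RingHom.map_mulVec f A v)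

variable {n K : Type*} [Fintype n] [DecidableEq n] [Field K]

theorem finrank_ker_toBilin' (A : Matrix n n K) :
    Module.finrank K (LinearMap.ker A.toBilin') = Fintype.card n - A.rank := by
  have hker : LinearMap.ker A.toBilin' = LinearMap.ker Aᵀ.mulVecLin := by
    ext v
    rw [LinearMap.mem_ker, LinearMap.mem_ker, mulVecLin_apply, mulVec_transpose,
      ← dotProduct_eq_zero_iff]
    simp [LinearMap.ext_iff, toBilin'_apply', dotProduct_mulVec]
  have hrank := LinearMap.finrank_range_add_finrank_ker Aᵀ.mulVecLin
  rw [Module.finrank_pi, ← Matrix.rank, rank_transpose] at hrank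
  rw [hker]; omega

theorem exists_isUnit_transpose_mul_mul_eq {A B : Matrix n n K} (hA : A.toBilin'.IsAlt)
    (hB : B.toBilin'.IsAlt) (hrank : A.rank = B.rank) :
    ∃ P : Matrix n n K, IsUnit P ∧ Pᵀ * A * P = B := by
  obtain ⟨e, he⟩ := exists_congr_eq_of_isAlt hA hB rfl (by simp [finrank_ker_toBilin', hrank])
  refine ⟨LinearMap.toMatrix' e.symm, ?_, ?_⟩
  · exact LinearMap.isUnit_toMatrix'_iff.2 ((Module.End.isUnit_iff _).2 e.symm.bijective)
  · apply toBilin'.injective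
    rw [← toBilin'_comp, toLin'_toMatrix', ← he]
    rfl

end AlternatingMatrices

section QuadraticDescent

theorem exists_map_subtype_eq_of_map_eq_map {m n K L : Type*} [Field K] [Field L] {f g : K →+* L}
    {A : Matrix m n K} (hA : A.map f = A.map g) :
    ∃ A₀ : Matrix m n (f.eqLocusField g), A₀.map (f.eqLocusField g).subtype = A :=
  ⟨of fun i k ↦ ⟨A i k, congrFun₂ hA i k⟩, rfl⟩

theorem map_transpose_mul_mul_eq {n R : Type*} [Fintype n] [CommRing R] {σ : R →+* R}
    {j x g : Matrix n n R} (hj : j.map σ = j) (hxj : xᵀ * j * x = j)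
    (hxg : x * g.map σ = g) : (gᵀ * j * g).map σ = gᵀ * j * g :=
  calc (gᵀ * j * g).map σ = (g.map σ)ᵀ * (xᵀ * j * x) * g.map σ := by
        rw [Matrix.map_mul, Matrix.map_mul, hj, hxj, transpose_map]
    _ = (x * g.map σ)ᵀ * j * (x * g.map σ) := by
        simp only [transpose_mul, Matrix.mul_assoc]
    _ = gᵀ * j * g := by rw [hxg]

variable {E : Type*} [Field E] {σ : E →+* E}

theorem span_fixedPoints_eq_top {V : Type*} [AddCommGroup V] [Module E V]
    (hσ : σ ≠ RingHom.id E) {c : V →ₛₗ[σ] V} (hc : Function.Involutive c) :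
    Submodule.span E (Function.fixedPoints c) = ⊤ := by
  obtain ⟨a, ha⟩ : ∃ a, σ a ≠ a := by
    by_contra! h
    exact hσ (RingHom.ext h)
  refine Submodule.eq_top_iff'.2 fun v ↦ ?_
  have hv : c (v + c v) = v + c v := by rw [map_add, hc v, add_comm]
  have hav : c (a • v + σ a • c v) = a • v + σ a • c v := by
    rw [map_add, ← map_smulₛₗ, hc, add_comm]
  have hcomb : v = (σ a - a)⁻¹ • (σ a • (v + c v) - (a • v + σ a • c v)) := by
    rw [eq_inv_smul_iff₀ (sub_ne_zero.2 ha)]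
    module
  rw [hcomb]
  exact Submodule.smul_mem _ _ <| Submodule.sub_mem _
    (Submodule.smul_mem _ _ (Submodule.subset_span hv)) (Submodule.subset_span hav)

theorem exists_basis_forall_mem_of_span_eq_top {ι K V : Type*} [DivisionRing K] [AddCommGroup V]
    [Module K V] (b₀ : Module.Basis ι K V) {s : Set V} (hs : Submodule.span K s = ⊤) :
    ∃ b : Module.Basis ι K V, ∀ i, b i ∈ s := by
  let b := Module.Basis.ofSpan hs.ge
  refine ⟨b.reindex (b.indexEquiv b₀), fun i ↦ ?_⟩
  rw [Module.Basis.reindex_apply]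
  exact Module.Basis.ofSpan_subset hs.ge (Set.mem_range_self _)

variable {n : Type*} [Fintype n] [DecidableEq n]

/-- Hilbert's Theorem 90 for `GL_n` and a quadratic extension. -/
theorem exists_isUnit_mul_map_eq (hσ : Function.Involutive σ) (hσ1 : σ ≠ RingHom.id E)
    {x : Matrix n n E} (hx : x * x.map σ = 1) : ∃ g, IsUnit g ∧ x * g.map σ = g := by
  let c : (n → E) →ₛₗ[σ] (n → E) :=
    { toFun := fun v ↦ x *ᵥ (σ ∘ v)
      map_add' := fun v w ↦ by
        rw [← mulVec_add]; congr 1; ext; simp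
      map_smul' := fun a v ↦ by
        rw [← mulVec_smul]; congr 1; ext; simp }
  have hc : Function.Involutive c := fun v ↦ by
    have hσxv : σ ∘ (x *ᵥ (σ ∘ v)) = x.map σ *ᵥ v := by
      ext i
      simp [RingHom.map_mulVec, ← Function.comp_assoc, hσ.comp_self]
    change x *ᵥ (σ ∘ (x *ᵥ (σ ∘ v))) = v
    rw [hσxv, mulVec_mulVec, hx, one_mulVec]
  obtain ⟨b, hb⟩ := exists_basis_forall_mem_of_span_eq_top (Pi.basisFun E n)
    (span_fixedPoints_eq_top hσ1 hc)
  let _ := (Pi.basisFun E n).invertibleToMatrix b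
  refine ⟨(Pi.basisFun E n).toMatrix b, isUnit_of_invertible _, ?_⟩
  ext i k
  exact congrFun (hb k) i

theorem exists_isUnit_map_eq_transpose_mul_mul_eq {A B : Matrix n n E} (hAσ : A.map σ = A)
    (hBσ : B.map σ = B) (hA : A.toBilin'.IsAlt) (hB : B.toBilin'.IsAlt)
    (hrank : A.rank = B.rank) :
    ∃ P : Matrix n n E, IsUnit P ∧ P.map σ = P ∧ Pᵀ * A * P = B := by
  obtain ⟨A₀, rfl⟩ := exists_map_subtype_eq_of_map_eq_map (g := RingHom.id E) hAσ
  obtain ⟨B₀, rfl⟩ := exists_map_subtype_eq_of_map_eq_map (g := RingHom.id E) hBσ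
  rw [rank_map_ringHom, rank_map_ringHom] at hrank
  obtain ⟨P₀, hP₀, rfl⟩ := exists_isUnit_transpose_mul_mul_eq
    (isAlt_toBilin'_of_map (RingHom.injective _) hA)
    (isAlt_toBilin'_of_map (RingHom.injective _) hB) hrank
  refine ⟨P₀.map (Subfield.subtype _), hP₀.map (Subfield.subtype _).mapMatrix, ?_, ?_⟩
  · ext i k
    exact (P₀ i k).2
  · rw [Matrix.map_mul, Matrix.map_mul, transpose_map]

theorem stmt_5_general (hσ : Function.Involutive σ) (hσ1 : σ ≠ RingHom.id E)
    {j : Matrix n n E} (hjσ : j.map σ = j) (hjalt : j.toBilin'.IsAlt)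
    {x : Matrix n n E} (hxj : xᵀ * j * x = j) (hxx : x * x.map σ = 1) :
    ∃ g : Matrix n n E, (IsUnit g ∧ gᵀ * j * g = j) ∧ x = g * (g.map σ)⁻¹ := by
  obtain ⟨g, hg, hxg⟩ := exists_isUnit_mul_map_eq hσ hσ1 hxx
  have hgalt : (gᵀ * j * g).toBilin'.IsAlt := by
    rw [← toBilin'_comp]
    exact fun v ↦ hjalt _
  have hrank : (gᵀ * j * g).rank = j.rank := by
    have hdet := (isUnit_iff_isUnit_det g).1 hg
    rw [rank_mul_eq_left_of_isUnit_det _ _ hdet,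
      rank_mul_eq_right_of_isUnit_det _ _ (isUnit_det_transpose g hdet)]
  obtain ⟨h, hh, hhσ, hgh⟩ := exists_isUnit_map_eq_transpose_mul_mul_eq
    (map_transpose_mul_mul_eq hjσ hxj hxg) hjσ hgalt hjalt hrank
  have hfix : x * (g * h).map σ = g * h := by
    rw [Matrix.map_mul, hhσ, ← Matrix.mul_assoc, hxg]
  have hunit : IsUnit ((g * h).map σ).det :=
    (isUnit_iff_isUnit_det _).1 ((hg.mul hh).map σ.mapMatrix)
  refine ⟨g * h, ⟨hg.mul hh, ?_⟩, ?_⟩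
  · calc (g * h)ᵀ * j * (g * h) = hᵀ * (gᵀ * j * g) * h := by
          simp only [transpose_mul, Matrix.mul_assoc]
      _ = j := hgh
  · calc x = x * (g * h).map σ * ((g * h).map σ)⁻¹ :=
          (mul_nonsing_inv_cancel_right _ _ hunit).symm
      _ = g * h * ((g * h).map σ)⁻¹ := by rw [hfix]

end QuadraticDescent

/-- In the symplectic case (`j ∈ GL_n(F)` an invertible alternating matrix,
`n` even, `G^j(E) = Sp(j,E) = {g ∈ GL_n(E) : gᵀ j g = j}`), the symmetric space
`X^j = {x ∈ G^j(E) : x·σ(x) = 1}` is a single `G^j(E)`-orbit for the twisted conjugation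
action `g·x = g x σ(g)⁻¹`: namely `X^j = G^j(E)·I_n`.
Here `F` is the fixed field of the Galois involution `σ` of the quadratic extension `E/F`
of non-archimedean local fields of characteristic zero, so "`j` has entries in `F`" is
expressed by `σ`-invariance of the entries. -/
theorem stmt_5 (p : ℕ) [Fact p.Prime]
    (E : Type) [Field E] [Algebra ℚ_[p] E] [FiniteDimensional ℚ_[p] E]
    (σ : E ≃ₐ[ℚ_[p]] E) (hσ1 : σ ≠ 1) (hσ2 : σ * σ = 1)
    (n : ℕ) (hn : Even n)
    (j : Matrix (Fin n) (Fin n) E)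
    (hjF : ∀ a b, σ (j a b) = j a b) (hjU : IsUnit j) (hjalt : jᵀ = -j)
    (x : Matrix (Fin n) (Fin n) E)
    (hx : (IsUnit x ∧ xᵀ * j * x = j) ∧ x * x.map ⇑σ = 1) :
    ∃ g : Matrix (Fin n) (Fin n) E,
      (IsUnit g ∧ gᵀ * j * g = j) ∧ x = g * 1 * (g.map ⇑σ)⁻¹ := by
  have : CharZero E := charZero_of_injective_algebraMap (algebraMap ℚ_[p] E).injective
  simpa only [Matrix.mul_one, RingHom.coe_coe] using stmt_5_general (σ := (σ : E →+* E))
    (AlgEquiv.congr_fun hσ2) (fun h ↦ hσ1 (AlgEquiv.ext (RingHom.congr_fun h)))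
    (Matrix.ext hjF) (isAlt_toBilin'_of_transpose_eq_neg hjalt) hx.1.2 hx.2
end
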